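/- arXiv:2511.12634 — 6 statements merged into one kernel-verified Lean document; each statement's English description precedes it below -/
import Mathlib

section
/- Let X be a finite-dimensional real inner product space, A : X → X linear, f(x) = Γ(x,x) for a symmetric bilinear map Γ : X × X → X, and τ > 0. Let E′ and E″ be linear subspaces of X such that every element γ ∈ E″ can be written as γ = ξ₀ − Σ_{i=1}^{p} f(ξ_i) for some p ∈ ℕ and ξ₀, ξ₁, …, ξ_p ∈ E′. Let γ : [0,τ] → E″ be piecewise constant and w₀ ∈ X, and assume that the system ẇ + A w + f(w) = γ with w(0) = w₀ has a solution w on [0,τ]. Then there exists a sequence (γ_n, ζ_n), n ∈ ℕ, of C^∞ functions from [0,τ] to E′ × E′ such that sup_n ( sup_{t∈[0,τ]} ‖ζ_n(t)‖ + ‖γ_n‖_{L²([0,τ];X)} ) < ∞, for all sufficiently large n the enlarged system ẇ_n + A(w_n+ζ_n) + f(w_n+ζ_n) = γ_n with w_n(0) = w₀ has a solution w_n on [0,τ], and sup_{t∈[0,τ]} ‖w(t) − w_n(t)‖ + sup_{t∈[0,τ]} ‖∫₀ᵗ ζ_n(s) ds‖ → 0 as n → ∞. -/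
open MeasureTheory Set intervalIntegral
open scoped ENNReal

noncomputable section

/-!
Write `f(x) = Γ(x, x)`. On each interval of constancy the force is `ξ₀ - ∑ f(ξᵢ)` with `ξᵢ ∈ E'`,
so on `[0,τ)` it equals `η₀ - ∑ f(ηᵢ)` for bounded measurable `E'`-valued step functions `ηᵢ`
(`exists_step_decomposition`). Mollification in `E'` gives smooth, uniformly bounded `hᵢₖ → ηᵢ`
almost everywhere (`exists_smooth_approx`). The controls are `γₖ = h₀ₖ` and
`ζₖ(s) = √2 ∑ᵢ cos(k i s) hᵢₖ(s)`.

By a Riemann–Lebesgue lemma uniform in the endpoint of integration (`BConv.vanish_cos_smul`), the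
functions `ζₖ`, `Aζₖ` and `Γ(w, ζₖ)` tend to zero in the relaxation norm. Since
`2 cos(k i s) cos(k l s) = cos(k (i - l) s) + cos(k (i + l) s)`, the only products in `f(ζₖ)` that
do not average out are the diagonal ones, and `f(ζₖ) → ∑ f(ηᵢ)` in the relaxation norm
(`vanish_bilin_osc`). Hence `w` solves the enlarged system up to a defect
`γₖ - f(ζₖ) - γ - Aζₖ - 2Γ(w, ζₖ)` vanishing in the relaxation norm.

A small defect forces a nearby solution (`exists_solution_near`): the vector field truncated around
`w` has a global solution by Picard–Lindelöf, Grönwall's inequality bounds its distance to `w` by a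
multiple of the defect, and once this is less than one the truncation is inactive.
-/

open Filter Topology

/-! ### Mollification and bounded almost everywhere convergence -/

/-- Convolution with shrinking bump functions: a bounded measurable function is an almost
everywhere limit of smooth functions obeying the same bound. -/
lemma exists_smooth_approx {E : Type*} [NormedAddCommGroup E] [NormedSpace ℝ E] [CompleteSpace E]
    {g : ℝ → E} (hg : AEStronglyMeasurable g volume) {M : ℝ} (hM : ∀ s, ‖g s‖ ≤ M) :
    ∃ h : ℕ → ℝ → E, (∀ k, ContDiff ℝ (⊤ : ℕ∞) (h k)) ∧ (∀ k s, ‖h k s‖ ≤ M) ∧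
      ∀ᵐ s, Tendsto (fun k => h k s) atTop (𝓝 (g s)) := by
  have hloc : LocallyIntegrable g volume := by
    refine (locallyIntegrable_const M).mono hg (Eventually.of_forall fun s => ?_)
    exact (hM s).trans (Real.le_norm_self M)
  let φ : ℕ → ContDiffBump (0 : ℝ) := fun k =>
    ⟨1 / ((k : ℝ) + 1) / 2, 1 / ((k : ℝ) + 1), half_pos (by positivity),
      half_lt_self (by positivity)⟩
  refine ⟨fun k => convolution ((φ k).normed volume) g (ContinuousLinearMap.lsmul ℝ ℝ) volume,
    fun k => ?_, fun k s => ?_, ?_⟩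
  · exact (φ k).hasCompactSupport_normed.contDiff_convolution_left _ (φ k).contDiff_normed hloc
  · simp only [convolution_def]
    calc _ ≤ ∫ t, (φ k).normed volume t * M := by
            refine norm_integral_le_of_norm_le ((φ k).integrable_normed.mul_const M)
              (Eventually.of_forall fun t => ?_)
            rw [ContinuousLinearMap.lsmul_apply, norm_smul,
              Real.norm_of_nonneg ((φ k).nonneg_normed t)]
            exact mul_le_mul_of_nonneg_left (hM _) ((φ k).nonneg_normed t)
      _ = M := by rw [MeasureTheory.integral_mul_const, (φ k).integral_normed, one_mul]
  · refine ContDiffBump.ae_convolution_tendsto_right_of_locallyIntegrable (K := 2) ?_ ?_ hloc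
    · exact tendsto_one_div_add_atTop_nhds_zero_nat
    · refine Eventually.of_forall fun k => le_of_eq ?_
      change 1 / ((k : ℝ) + 1) = 2 * (1 / ((k : ℝ) + 1) / 2)
      ring

/-- Uniformly bounded almost everywhere convergence of a sequence of measurable functions. -/
structure BConv {E : Type*} [NormedAddCommGroup E] (g : ℕ → ℝ → E) (g' : ℝ → E) : Prop where
  meas : ∀ k, AEStronglyMeasurable (g k) volume
  bdd : ∃ M, (∀ k s, ‖g k s‖ ≤ M) ∧ ∀ s, ‖g' s‖ ≤ M
  lim : ∀ᵐ s, Tendsto (fun k => g k s) atTop (𝓝 (g' s))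

section BConv

set_option linter.unusedSectionVars false

variable {E F G : Type*} [NormedAddCommGroup E] [NormedSpace ℝ E]
  [NormedAddCommGroup F] [NormedSpace ℝ F] [NormedAddCommGroup G] [NormedSpace ℝ G]

lemma BConv.meas_lim {g : ℕ → ℝ → E} {g' : ℝ → E} (h : BConv g g') :
    AEStronglyMeasurable g' volume :=
  aestronglyMeasurable_of_tendsto_ae atTop h.meas h.lim

lemma BConv.const {g : ℝ → E} (hg : AEStronglyMeasurable g volume) {M : ℝ}
    (hM : ∀ s, ‖g s‖ ≤ M) : BConv (fun _ => g) g :=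
  ⟨fun _ => hg, ⟨M, fun _ => hM, hM⟩, Eventually.of_forall fun _ => tendsto_const_nhds⟩

lemma BConv.sub {g h : ℕ → ℝ → E} {g' h' : ℝ → E} (hg : BConv g g') (hh : BConv h h') :
    BConv (fun k s => g k s - h k s) (fun s => g' s - h' s) := by
  obtain ⟨M, h1, h2⟩ := hg.bdd
  obtain ⟨N, h3, h4⟩ := hh.bdd
  refine ⟨fun k => (hg.meas k).sub (hh.meas k), ⟨M + N, fun k s => ?_, fun s => ?_⟩, ?_⟩
  · exact (norm_sub_le _ _).trans (add_le_add (h1 k s) (h3 k s))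
  · exact (norm_sub_le _ _).trans (add_le_add (h2 s) (h4 s))
  · filter_upwards [hg.lim, hh.lim] with s a b using a.sub b

lemma BConv.clm (L : E →L[ℝ] F) {g : ℕ → ℝ → E} {g' : ℝ → E} (hg : BConv g g') :
    BConv (fun k s => L (g k s)) (fun s => L (g' s)) := by
  obtain ⟨M, h1, h2⟩ := hg.bdd
  refine ⟨fun k => L.continuous.comp_aestronglyMeasurable (hg.meas k),
    ⟨‖L‖ * M, fun k s => L.le_opNorm_of_le (h1 k s), fun s => L.le_opNorm_of_le (h2 s)⟩, ?_⟩
  filter_upwards [hg.lim] with s a using (L.continuous.tendsto _).comp a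

lemma BConv.bilin (B : E →L[ℝ] F →L[ℝ] G) {g : ℕ → ℝ → E} {g' : ℝ → E} {h : ℕ → ℝ → F}
    {h' : ℝ → F} (hg : BConv g g') (hh : BConv h h') :
    BConv (fun k s => B (g k s) (h k s)) (fun s => B (g' s) (h' s)) := by
  obtain ⟨M, h1, h2⟩ := hg.bdd
  obtain ⟨N, h3, h4⟩ := hh.bdd
  have hc : Continuous fun p : E × F => B p.1 p.2 := B.isBoundedBilinearMap.continuous
  refine ⟨fun k => hc.comp_aestronglyMeasurable ((hg.meas k).prodMk (hh.meas k)),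
    ⟨‖B‖ * M * N, fun k s => B.le_of_opNorm₂_le_of_le le_rfl (h1 k s) (h3 k s),
      fun s => B.le_of_opNorm₂_le_of_le le_rfl (h2 s) (h4 s)⟩, ?_⟩
  filter_upwards [hg.lim, hh.lim] with s a b
  exact (hc.tendsto (g' s, h' s)).comp (a.prodMk_nhds b)

lemma BConv.intervalIntegrable {g : ℕ → ℝ → E} {g' : ℝ → E} (h : BConv g g') (k : ℕ) (a b : ℝ) :
    IntervalIntegrable (g k) volume a b := by
  obtain ⟨M, h1, -⟩ := h.bdd
  exact (intervalIntegrable_const (c := M)).mono_fun (h.meas k).restrict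
    (Eventually.of_forall fun s => (h1 k s).trans (Real.le_norm_self M))

/-- Bounded almost everywhere convergence implies convergence in `L¹(0,τ)`. -/
lemma BConv.l1 {g : ℕ → ℝ → E} {g' : ℝ → E} (h : BConv g g') (τ : ℝ) {ε : ℝ} (hε : 0 < ε) :
    ∃ N, ∀ k ≥ N, ∫ s in (0 : ℝ)..τ, ‖g k s - g' s‖ ≤ ε := by
  obtain ⟨M, h1, h2⟩ := h.bdd
  have ht : Tendsto (fun k => ∫ s in (0 : ℝ)..τ, ‖g k s - g' s‖) atTop
      (𝓝 (∫ _ in (0 : ℝ)..τ, (0 : ℝ))) := by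
    refine tendsto_integral_filter_of_dominated_convergence (fun _ => M + M)
      (Eventually.of_forall fun k => ((h.meas k).sub h.meas_lim).norm.restrict)
      (Eventually.of_forall fun k => Eventually.of_forall fun s _ => ?_)
      intervalIntegrable_const ?_
    · rw [norm_norm]
      exact (norm_sub_le _ _).trans (add_le_add (h1 k s) (h2 s))
    · filter_upwards [h.lim] with s hs _
      simpa using (hs.sub_const (g' s)).norm
  rw [intervalIntegral.integral_zero] at ht
  obtain ⟨N, hN⟩ := eventually_atTop.1 (ht.eventually_le_const hε)
  exact ⟨N, hN⟩

/-! ### Sequences vanishing in the relaxation norm -/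

/-- The sequence `v` is integrable on `[0,τ]` and converges to zero in the relaxation norm. -/
def Vanish (τ : ℝ) (v : ℕ → ℝ → E) : Prop :=
  (∀ k, IntervalIntegrable (v k) volume 0 τ) ∧
    ∀ ε > 0, ∃ N, ∀ k ≥ N, ∀ t ∈ Icc 0 τ, ‖∫ s in (0 : ℝ)..t, v k s‖ ≤ ε

lemma intervalIntegrable_of_mem {τ t : ℝ} {v : ℝ → E} (h : IntervalIntegrable v volume 0 τ)
    (ht : t ∈ Icc 0 τ) : IntervalIntegrable v volume 0 t :=
  h.mono_set (by
    rw [uIcc_of_le ht.1, uIcc_of_le (ht.1.trans ht.2)]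
    exact Icc_subset_Icc_right ht.2)

lemma norm_integral_le_full {τ t : ℝ} {v : ℝ → E} (h : IntervalIntegrable v volume 0 τ)
    (ht : t ∈ Icc 0 τ) : ‖∫ s in (0 : ℝ)..t, v s‖ ≤ ∫ s in (0 : ℝ)..τ, ‖v s‖ :=
  (intervalIntegral.norm_integral_le_integral_norm ht.1).trans
    (integral_mono_interval le_rfl ht.1 ht.2 (Eventually.of_forall fun _ => norm_nonneg _) h.norm)

lemma Vanish.add {τ : ℝ} {v v' : ℕ → ℝ → E} (h : Vanish τ v) (h' : Vanish τ v') :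
    Vanish τ (fun k s => v k s + v' k s) := by
  refine ⟨fun k => (h.1 k).add (h'.1 k), fun ε hε => ?_⟩
  obtain ⟨N, hN⟩ := h.2 (ε / 2) (half_pos hε)
  obtain ⟨N', hN'⟩ := h'.2 (ε / 2) (half_pos hε)
  refine ⟨max N N', fun k hk t ht => ?_⟩
  rw [integral_add (intervalIntegrable_of_mem (h.1 k) ht) (intervalIntegrable_of_mem (h'.1 k) ht)]
  have h1 := hN k (le_of_max_le_left hk) t ht
  have h2 := hN' k (le_of_max_le_right hk) t ht
  linarith [norm_add_le (∫ s in (0 : ℝ)..t, v k s) (∫ s in (0 : ℝ)..t, v' k s)]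

lemma Vanish.clm [CompleteSpace E] [CompleteSpace F] (L : E →L[ℝ] F) {τ : ℝ} {v : ℕ → ℝ → E}
    (h : Vanish τ v) : Vanish τ (fun k s => L (v k s)) := by
  refine ⟨fun k => ⟨L.integrable_comp (h.1 k).1, L.integrable_comp (h.1 k).2⟩, fun ε hε => ?_⟩
  obtain ⟨N, hN⟩ := h.2 (ε / (‖L‖ + 1)) (by positivity)
  refine ⟨N, fun k hk t ht => ?_⟩
  rw [L.intervalIntegral_comp_comm (intervalIntegrable_of_mem (h.1 k) ht)]
  calc _ ≤ ‖L‖ * (ε / (‖L‖ + 1)) := L.le_opNorm_of_le (hN k hk t ht)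
    _ ≤ (‖L‖ + 1) * (ε / (‖L‖ + 1)) := by gcongr; linarith
    _ = ε := by field_simp

lemma Vanish.const_smul [CompleteSpace E] (c : ℝ) {τ : ℝ} {v : ℕ → ℝ → E} (h : Vanish τ v) :
    Vanish τ (fun k s => c • v k s) := by
  simpa using h.clm (c • ContinuousLinearMap.id ℝ E)

lemma Vanish.sub [CompleteSpace E] {τ : ℝ} {v v' : ℕ → ℝ → E} (h : Vanish τ v)
    (h' : Vanish τ v') : Vanish τ (fun k s => v k s - v' k s) := by
  simpa [sub_eq_add_neg] using h.add (h'.const_smul (-1))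

lemma Vanish.sum {ι : Type*} (S : Finset ι) {τ : ℝ} {v : ι → ℕ → ℝ → E}
    (h : ∀ i ∈ S, Vanish τ (v i)) : Vanish τ (fun k s => ∑ i ∈ S, v i k s) := by
  classical
  induction S using Finset.induction_on with
  | empty =>
    refine ⟨fun k => by simp, fun ε hε => ⟨0, fun k _ t _ => by simp [hε.le]⟩⟩
  | insert a S ha ih =>
    simp only [Finset.sum_insert ha]
    exact (h a (Finset.mem_insert_self a S)).add
      (ih fun i hi => h i (Finset.mem_insert_of_mem hi))

lemma BConv.vanish {g : ℕ → ℝ → E} {g' : ℝ → E} (h : BConv g g') (τ : ℝ) :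
    Vanish τ (fun k s => g k s - g' s) := by
  have hI : ∀ k, IntervalIntegrable (fun s => g k s - g' s) volume 0 τ := fun k => by
    obtain ⟨M, -, h2⟩ := h.bdd
    exact (h.intervalIntegrable k 0 τ).sub ((BConv.const h.meas_lim h2).intervalIntegrable 0 0 τ)
  refine ⟨hI, fun ε hε => ?_⟩
  obtain ⟨N, hN⟩ := h.l1 τ hε
  exact ⟨N, fun k hk t ht => (norm_integral_le_full (hI k) ht).trans (hN k hk)⟩

/-- Integration by parts against `sin (k c s) / (k c)`: a fixed smooth profile modulated at
frequency tending to infinity vanishes in the relaxation norm. -/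
lemma vanish_cos_smul_smooth [CompleteSpace E] {h : ℝ → E} (hh : ContDiff ℝ (⊤ : ℕ∞) h) (τ : ℝ)
    {c : ℝ} (hc : c ≠ 0) :
    Vanish τ (fun k s => Real.cos (k * c * s) • h s) := by
  have hcont : Continuous h := hh.continuous
  have hdcont : Continuous (deriv h) := hh.continuous_deriv (by simp)
  refine ⟨fun k => (Continuous.intervalIntegrable (by fun_prop) _ _), fun ε hε => ?_⟩
  obtain ⟨C, hC⟩ := isCompact_Icc.exists_bound_of_continuousOn (s := Icc 0 τ) hcont.continuousOn
  obtain ⟨D, hD⟩ := isCompact_Icc.exists_bound_of_continuousOn (s := Icc 0 τ) hdcont.continuousOn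
  obtain ⟨N, hN⟩ := exists_nat_gt ((C + C + D * τ) / (ε * |c|))
  refine ⟨N + 1, fun k hk t ht => ?_⟩
  have hτ : 0 ≤ τ := ht.1.trans ht.2
  have hk1 : (N : ℝ) + 1 ≤ k := by exact_mod_cast hk
  have hk0 : (0 : ℝ) < k := by linarith [N.cast_nonneg (α := ℝ)]
  have hkc : (k : ℝ) * c ≠ 0 := mul_ne_zero hk0.ne' hc
  have hcpos : 0 < |c| := abs_pos.2 hc
  have hD0 : 0 ≤ D := (norm_nonneg _).trans (hD 0 ⟨le_rfl, hτ⟩)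
  have hu : ∀ s : ℝ, HasDerivAt (fun s : ℝ => Real.sin (k * c * s) / (k * c))
      (Real.cos (k * c * s)) s := fun s => by
    have := ((hasDerivAt_id s).const_mul ((k : ℝ) * c)).sin.div_const ((k : ℝ) * c)
    refine this.congr_deriv ?_
    simp only [id]
    field_simp
  have hv : ∀ s : ℝ, HasDerivAt h (deriv h s) s := fun s =>
    (hh.differentiable (by simp)).differentiableAt.hasDerivAt
  have hub : ∀ s : ℝ, ‖Real.sin (k * c * s) / (k * c)‖ ≤ 1 / (k * |c|) := fun s => by
    rw [norm_div, norm_mul, Real.norm_natCast, Real.norm_eq_abs, Real.norm_eq_abs]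
    gcongr
    exact Real.abs_sin_le_one _
  have key := integral_smul_deriv_eq_deriv_smul_of_hasDerivAt (a := 0) (b := t)
    (u := fun s : ℝ => Real.sin (k * c * s) / (k * c)) (v := h)
    (fun s _ => (hu s).continuousAt.continuousWithinAt) hcont.continuousOn
    (fun s _ => hu s) (fun s _ => hv s)
    (Continuous.intervalIntegrable (by fun_prop) _ _) (hdcont.intervalIntegrable _ _)
  have h1 : ‖∫ s in (0 : ℝ)..t, (Real.sin (k * c * s) / (k * c)) • deriv h s‖
      ≤ 1 / (k * |c|) * D * |t - 0| := by
    refine norm_integral_le_of_norm_le_const fun s hs => ?_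
    rw [uIoc_of_le ht.1] at hs
    rw [norm_smul]
    exact mul_le_mul (hub s) (hD s ⟨hs.1.le, hs.2.trans ht.2⟩) (norm_nonneg _) (by positivity)
  have h2 : ∀ s ∈ Icc 0 τ, ‖(Real.sin (k * c * s) / (k * c)) • h s‖ ≤ 1 / (k * |c|) * C :=
    fun s hs => by
      rw [norm_smul]
      exact mul_le_mul (hub s) (hC s hs) (norm_nonneg _) (by positivity)
  have h3 := h2 t ht
  have h4 := h2 0 ⟨le_rfl, hτ⟩
  rw [sub_zero, abs_of_nonneg ht.1] at h1
  have h5 : (∫ s in (0 : ℝ)..t, Real.cos (k * c * s) • h s) =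
      (Real.sin (k * c * t) / (k * c)) • h t - (Real.sin (k * c * 0) / (k * c)) • h 0 -
        ∫ s in (0 : ℝ)..t, (Real.sin (k * c * s) / (k * c)) • deriv h s := by
    rw [key]; abel
  rw [h5]
  calc _ ≤ 1 / (k * |c|) * C + 1 / (k * |c|) * C + 1 / (k * |c|) * D * t := by
        refine (norm_sub_le _ _).trans (add_le_add ((norm_sub_le _ _).trans (add_le_add h3 h4)) h1)
    _ ≤ 1 / (k * |c|) * C + 1 / (k * |c|) * C + 1 / (k * |c|) * D * τ := by
        gcongr
        exact ht.2
    _ = (C + C + D * τ) / (k * |c|) := by ring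
    _ ≤ ε := by
        rw [div_le_iff₀ (by positivity)]
        rw [div_lt_iff₀ (by positivity)] at hN
        have : (N : ℝ) * (ε * |c|) ≤ k * (ε * |c|) := by gcongr; linarith
        nlinarith

/-- The Riemann–Lebesgue lemma, uniformly in the upper limit of integration, for amplitudes that
converge boundedly almost everywhere. -/
lemma BConv.vanish_cos_smul [CompleteSpace E] {g : ℕ → ℝ → E} {g' : ℝ → E} (h : BConv g g') (τ : ℝ)
    {c : ℝ} (hc : c ≠ 0) :
    Vanish τ (fun k s => Real.cos (k * c * s) • g k s) := by
  obtain ⟨M, h1, h2⟩ := h.bdd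
  have hint : ∀ k : ℕ, IntervalIntegrable (fun s => Real.cos (k * c * s) • g k s) volume 0 τ :=
    fun k => (h.intervalIntegrable k 0 τ).continuousOn_smul
      (Continuous.continuousOn (by fun_prop))
  refine ⟨hint, fun ε hε => ?_⟩
  obtain ⟨p, hp1, hp2, hp3⟩ := exists_smooth_approx h.meas_lim h2
  have hpB : BConv p g' := ⟨fun k => (hp1 k).continuous.aestronglyMeasurable, ⟨M, hp2, h2⟩, hp3⟩
  obtain ⟨J, hJ⟩ := hpB.l1 τ (by positivity : 0 < ε / 3)
  obtain ⟨N, hN⟩ := h.l1 τ (by positivity : 0 < ε / 3)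
  have hsm := vanish_cos_smul_smooth (hp1 J) τ hc
  obtain ⟨N', hN'⟩ := hsm.2 (ε / 3) (by positivity)
  refine ⟨max N N', fun k hk t ht => ?_⟩
  have hτ : 0 ≤ τ := ht.1.trans ht.2
  have hgi := h.intervalIntegrable k 0 τ
  have hpi := hpB.intervalIntegrable J 0 τ
  have hli := (BConv.const h.meas_lim h2).intervalIntegrable 0 0 τ
  have hdi : IntervalIntegrable (fun s => Real.cos (k * c * s) • (g k s - p J s)) volume 0 τ :=
    (hgi.sub hpi).continuousOn_smul (Continuous.continuousOn (by fun_prop))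
  have e : (∫ s in (0 : ℝ)..t, Real.cos (k * c * s) • g k s) =
      (∫ s in (0 : ℝ)..t, Real.cos (k * c * s) • p J s) +
        ∫ s in (0 : ℝ)..t, Real.cos (k * c * s) • (g k s - p J s) := by
    rw [← integral_add (intervalIntegrable_of_mem (hsm.1 k) ht) (intervalIntegrable_of_mem hdi ht)]
    simp [← smul_add]
  have hb : ‖∫ s in (0 : ℝ)..t, Real.cos (k * c * s) • (g k s - p J s)‖ ≤ ε / 3 + ε / 3 := by
    calc _ ≤ ∫ s in (0 : ℝ)..τ, ‖Real.cos (k * c * s) • (g k s - p J s)‖ :=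
          norm_integral_le_full hdi ht
      _ ≤ ∫ s in (0 : ℝ)..τ, (‖g k s - g' s‖ + ‖p J s - g' s‖) := by
          refine integral_mono_on hτ hdi.norm ((hgi.sub hli).norm.add (hpi.sub hli).norm)
            fun s _ => ?_
          rw [norm_smul]
          have a1 : ‖Real.cos (k * c * s)‖ ≤ 1 := Real.abs_cos_le_one _
          have a2 := norm_sub_le (g k s - g' s) (p J s - g' s)
          rw [sub_sub_sub_cancel_right] at a2
          exact (mul_le_of_le_one_left (norm_nonneg _) a1).trans a2
      _ = (∫ s in (0 : ℝ)..τ, ‖g k s - g' s‖) + ∫ s in (0 : ℝ)..τ, ‖p J s - g' s‖ :=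
          integral_add (hgi.sub hli).norm (hpi.sub hli).norm
      _ ≤ _ := add_le_add (hN k (le_of_max_le_left hk)) (hJ J le_rfl)
  rw [e]
  have := hN' k (le_of_max_le_right hk) t ht
  exact (norm_add_le _ _).trans (by linarith)

end BConv

/-! ### Perturbation of solutions -/

section Perturbation

variable {X : Type*} [NormedAddCommGroup X] [NormedSpace ℝ X]

/-- A Lipschitz truncation onto the unit ball, equal to the identity on that ball. -/
def cut (x : X) : X := (max 1 ‖x‖)⁻¹ • x

lemma norm_cut_le_one (x : X) : ‖cut x‖ ≤ 1 := by
  have h : 0 < max 1 ‖x‖ := lt_max_of_lt_left one_pos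
  rw [cut, norm_smul, norm_inv, Real.norm_of_nonneg h.le, inv_mul_le_iff₀ h, mul_one]
  exact le_max_right _ _

lemma norm_cut_le (x : X) : ‖cut x‖ ≤ ‖x‖ := by
  have h : 0 < max 1 ‖x‖ := lt_max_of_lt_left one_pos
  rw [cut, norm_smul, norm_inv, Real.norm_of_nonneg h.le]
  exact mul_le_of_le_one_left (norm_nonneg _) (inv_le_one_of_one_le₀ (le_max_left _ _))

lemma cut_eq_self {x : X} (hx : ‖x‖ ≤ 1) : cut x = x := by
  simp [cut, max_eq_left hx]

lemma norm_cut_sub_cut_le (x y : X) : ‖cut x - cut y‖ ≤ 2 * ‖x - y‖ := by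
  have ha : 1 ≤ max 1 ‖x‖ := le_max_left _ _
  have hb : 0 < max 1 ‖y‖ := lt_max_of_lt_left one_pos
  have hab : |max 1 ‖y‖ - max 1 ‖x‖| ≤ ‖x - y‖ := by
    have h1 := abs_max_sub_max_le_abs ‖y‖ ‖x‖ 1
    rw [max_comm 1, max_comm 1]
    refine h1.trans ?_
    rw [norm_sub_rev]
    exact abs_norm_sub_norm_le y x
  have hy := norm_cut_le_one y
  have e : cut x - cut y = (max 1 ‖x‖)⁻¹ • (x - y)
      + ((max 1 ‖x‖)⁻¹ * (max 1 ‖y‖ - max 1 ‖x‖)) • cut y := by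
    have ha' : max 1 ‖x‖ ≠ 0 := (zero_lt_one.trans_le ha).ne'
    rw [cut, cut, smul_sub, smul_smul]
    have : (max 1 ‖x‖)⁻¹ * (max 1 ‖y‖ - max 1 ‖x‖) * (max 1 ‖y‖)⁻¹
        = (max 1 ‖x‖)⁻¹ - (max 1 ‖y‖)⁻¹ := by
      field_simp
    rw [this, sub_smul]
    abel
  have hi : ‖(max 1 ‖x‖)⁻¹‖ ≤ 1 := by
    rw [norm_inv, Real.norm_of_nonneg (zero_le_one.trans ha)]
    exact inv_le_one_of_one_le₀ ha
  rw [e]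
  refine (norm_add_le _ _).trans ?_
  rw [norm_smul, norm_smul, norm_mul]
  have h1 : ‖(max 1 ‖x‖)⁻¹‖ * ‖x - y‖ ≤ 1 * ‖x - y‖ := by gcongr
  have h2 : ‖(max 1 ‖x‖)⁻¹‖ * ‖max 1 ‖y‖ - max 1 ‖x‖‖ * ‖cut y‖ ≤ 1 * ‖x - y‖ * 1 := by
    gcongr
    exact hab
  linarith

lemma continuous_cut : Continuous (cut : X → X) :=
  (LipschitzWith.of_dist_le_mul (K := 2) fun x y => by
    simpa [dist_eq_norm] using norm_cut_sub_cut_le x y).continuous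

/-- Grönwall's inequality in integral form. -/
lemma gronwall_integral {u : ℝ → ℝ} (hu : Continuous u) {δ L τ : ℝ} (hL : 0 ≤ L)
    (h : ∀ t ∈ Icc 0 τ, u t ≤ δ + L * ∫ s in (0 : ℝ)..t, u s) :
    ∀ t ∈ Icc 0 τ, u t ≤ δ * Real.exp (L * t) := by
  have hd : ∀ t, HasDerivAt (fun t => δ + L * ∫ s in (0 : ℝ)..t, u s) (L * u t) t := fun t =>
    ((integral_hasDerivAt_right (hu.intervalIntegrable _ _)
      hu.aestronglyMeasurable.stronglyMeasurableAtFilter hu.continuousAt).const_mul L).const_add δ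
  have key := le_gronwallBound_of_liminf_deriv_right_le (a := 0) (b := τ) (δ := δ) (K := L) (ε := 0)
    (f := fun t => δ + L * ∫ s in (0 : ℝ)..t, u s) (f' := fun t => L * u t)
    (fun t _ => (hd t).continuousAt.continuousWithinAt)
    (fun t _ r hr => (hd t).hasDerivWithinAt.liminf_right_slope_le hr)
    (by simp) (fun t ht => by
      have := h t ⟨ht.1, ht.2.le⟩
      simpa using mul_le_mul_of_nonneg_left this hL)
  intro t ht
  refine (h t ht).trans ((key t ht).trans_eq ?_)
  rw [gronwallBound_ε0, sub_zero]

lemma bilin_sub_bilin (B : X →L[ℝ] X →L[ℝ] X) (a b : X) :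
    B a a - B b b = B a (a - b) + B (a - b) b := by
  simp

/-- The vector field of the enlarged system, truncated around the reference curve `w`, is bounded
and globally Lipschitz in the state, so it has a solution on the whole of `[0,τ]`. -/
lemma exists_truncated_solution [CompleteSpace X] (A : X →L[ℝ] X) (B : X →L[ℝ] X →L[ℝ] X)
    {τ : ℝ} (hτ : 0 < τ) {w ζ γ : ℝ → X} (hw : Continuous w) (hζ : Continuous ζ)
    (hγ : Continuous γ) (w₀ : X) :
    ∃ v : ℝ → X, Continuous v ∧ ∀ t ∈ Icc 0 τ, v t = w₀ + ∫ s in (0 : ℝ)..t,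
      (γ s - A (w s + cut (v s - w s) + ζ s)
        - B (w s + cut (v s - w s) + ζ s) (w s + cut (v s - w s) + ζ s)) := by
  have hcut : Continuous (cut : X → X) := continuous_cut
  obtain ⟨R, hR⟩ := isCompact_Icc.exists_bound_of_continuousOn (s := Icc 0 τ)
    (hw.add hζ).continuousOn
  obtain ⟨C, hC⟩ := isCompact_Icc.exists_bound_of_continuousOn (s := Icc 0 τ) hγ.continuousOn
  have hR0 : 0 ≤ R := (norm_nonneg _).trans (hR 0 ⟨le_rfl, hτ.le⟩)
  have hC0 : 0 ≤ C := (norm_nonneg _).trans (hC 0 ⟨le_rfl, hτ.le⟩)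
  set z : ℝ → X → X := fun t x => w t + cut (x - w t) + ζ t with hz
  have hzb : ∀ t ∈ Icc 0 τ, ∀ x, ‖z t x‖ ≤ R + 1 := fun t ht x => by
    have e : z t x = (w t + ζ t) + cut (x - w t) := by simp only [hz]; abel
    rw [e]
    exact (norm_add_le _ _).trans (add_le_add (hR t ht) (norm_cut_le_one _))
  have hzl : ∀ t x y, ‖z t x - z t y‖ ≤ 2 * ‖x - y‖ := fun t x y => by
    have e : z t x - z t y = cut (x - w t) - cut (y - w t) := by simp only [hz]; abel
    rw [e]
    simpa using norm_cut_sub_cut_le (x - w t) (y - w t)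
  set F : ℝ → X → X := fun t x => γ t - A (z t x) - B (z t x) (z t x) with hF
  have hFc : ∀ v : ℝ → X, Continuous v → Continuous fun t => F t (v t) := fun v hv => by
    simp only [hF, hz]
    fun_prop
  set L : NNReal := ⟨C + ‖A‖ * (R + 1) + ‖B‖ * (R + 1) * (R + 1), by positivity⟩ with hLdef
  set K : NNReal := ⟨2 * (‖A‖ + 2 * (‖B‖ * (R + 1))), by positivity⟩ with hKdef
  have hpl : IsPicardLindelof F (tmin := 0) (tmax := τ) ⟨0, le_rfl, hτ.le⟩ w₀
      (L * ⟨τ, hτ.le⟩) 0 L K := by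
    refine ⟨fun t ht => LipschitzWith.lipschitzOnWith (LipschitzWith.of_dist_le_mul fun x y => ?_),
      fun x _ => (hFc _ continuous_const).continuousOn, fun t ht x _ => ?_, ?_⟩
    · rw [dist_eq_norm, dist_eq_norm]
      have e : F t x - F t y = -(A (z t x - z t y)) -
          (B (z t x) (z t x - z t y) + B (z t x - z t y) (z t y)) := by
        rw [← bilin_sub_bilin, map_sub]
        simp only [hF]
        abel
      have h1 : ‖A (z t x - z t y)‖ ≤ ‖A‖ * (2 * ‖x - y‖) := A.le_opNorm_of_le (hzl t x y)
      have h2 : ‖B (z t x) (z t x - z t y)‖ ≤ ‖B‖ * (R + 1) * (2 * ‖x - y‖) :=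
        B.le_of_opNorm₂_le_of_le le_rfl (hzb t ht x) (hzl t x y)
      have h3 : ‖B (z t x - z t y) (z t y)‖ ≤ ‖B‖ * (2 * ‖x - y‖) * (R + 1) :=
        B.le_of_opNorm₂_le_of_le le_rfl (hzl t x y) (hzb t ht y)
      have hK : (K : ℝ) = 2 * (‖A‖ + 2 * (‖B‖ * (R + 1))) := rfl
      rw [e, hK]
      have h4 := norm_sub_le (-(A (z t x - z t y)))
        (B (z t x) (z t x - z t y) + B (z t x - z t y) (z t y))
      have h5 := norm_add_le (B (z t x) (z t x - z t y)) (B (z t x - z t y) (z t y))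
      rw [norm_neg] at h4
      linarith
    · have hL : (L : ℝ) = C + ‖A‖ * (R + 1) + ‖B‖ * (R + 1) * (R + 1) := rfl
      rw [hL]
      exact (norm_sub_le _ _).trans (add_le_add ((norm_sub_le _ _).trans (add_le_add (hC t ht)
        (A.le_opNorm_of_le (hzb t ht x))))
        (B.le_of_opNorm₂_le_of_le le_rfl (hzb t ht x) (hzb t ht x)))
    · simp only [sub_zero, sub_self, max_eq_left hτ.le, NNReal.coe_zero]
      exact le_rfl
  obtain ⟨α, hα0, hα⟩ := hpl.exists_eq_forall_mem_Icc_hasDerivWithinAt₀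
  have hαc : ContinuousOn α (Icc 0 τ) := fun t ht => (hα t ht).continuousWithinAt
  refine ⟨IccExtend hτ.le ((Icc 0 τ).domRestrict α),
    (continuousOn_iff_continuous_domRestrict.1 hαc).Icc_extend', fun t ht => ?_⟩
  have hvc : Continuous (IccExtend hτ.le ((Icc 0 τ).domRestrict α)) :=
    (continuousOn_iff_continuous_domRestrict.1 hαc).Icc_extend'
  have hveq : ∀ s ∈ Icc 0 τ, IccExtend hτ.le ((Icc 0 τ).domRestrict α) s = α s := fun s hs => by
    rw [IccExtend_of_mem _ _ hs, domRestrict_apply]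
  generalize IccExtend hτ.le ((Icc 0 τ).domRestrict α) = v at hvc hveq
  have hint := integral_eq_sub_of_hasDerivAt_of_le (f := v) (f' := fun s => F s (v s)) ht.1
    hvc.continuousOn (fun s hs => by
      have hs' : s ∈ Ioo 0 τ := ⟨hs.1, hs.2.trans_le ht.2⟩
      have h1 := (hα s ⟨hs'.1.le, hs'.2.le⟩).hasDerivAt (Icc_mem_nhds hs'.1 hs'.2)
      rw [hveq s ⟨hs'.1.le, hs'.2.le⟩]
      refine h1.congr_of_eventuallyEq ?_
      filter_upwards [Icc_mem_nhds hs'.1 hs'.2] with r hr using hveq r hr)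
    ((hFc v hvc).intervalIntegrable _ _)
  have h0 : v 0 = w₀ := by rw [hveq 0 ⟨le_rfl, hτ.le⟩]; exact hα0
  change v t = w₀ + ∫ s in (0 : ℝ)..t, F s (v s)
  rw [hint, h0]
  abel

/-- If the defect of `w` as a solution of the enlarged system has relaxation norm at most `δ`, with
`δ` small, then the enlarged system has a solution on `[0,τ]` which is `O(δ)`-close to `w`. -/
lemma exists_solution_near [CompleteSpace X] (A : X →L[ℝ] X) (B : X →L[ℝ] X →L[ℝ] X)
    (hB : ∀ a b, B a b = B b a) {τ : ℝ} (hτ : 0 < τ) {w γ ζ γ' : ℝ → X} (hw : Continuous w)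
    (hγ : IntervalIntegrable γ volume 0 τ) {w₀ : X}
    (hsol : ∀ t ∈ Icc 0 τ, w t = w₀ + ∫ s in (0 : ℝ)..t, (γ s - A (w s) - B (w s) (w s)))
    {R : ℝ} (hζ : Continuous ζ) (hγ' : Continuous γ') (hR : ∀ s, ‖w s + ζ s‖ ≤ R)
    {δ : ℝ}
    (hδ : ∀ t ∈ Icc 0 τ, ‖∫ s in (0 : ℝ)..t,
      (γ' s - B (ζ s) (ζ s) - γ s - A (ζ s) - (2 : ℝ) • B (w s) (ζ s))‖ ≤ δ)
    (hsmall : δ * Real.exp ((‖A‖ + ‖B‖ + 2 * (‖B‖ * R)) * τ) ≤ 1) :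
    ∃ v : ℝ → X, Continuous v ∧
      (∀ t ∈ Icc 0 τ, v t = w₀ + ∫ s in (0 : ℝ)..t,
        (γ' s - A (v s + ζ s) - B (v s + ζ s) (v s + ζ s))) ∧
      ∀ t ∈ Icc 0 τ, ‖w t - v t‖ ≤ δ * Real.exp ((‖A‖ + ‖B‖ + 2 * (‖B‖ * R)) * τ) := by
  have hcut : Continuous (cut : X → X) := continuous_cut
  obtain ⟨v, hvc, hv⟩ := exists_truncated_solution A B hτ hw hζ hγ' w₀
  have hR0 : 0 ≤ R := (norm_nonneg _).trans (hR 0)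
  have hδ0 : 0 ≤ δ := (norm_nonneg _).trans (hδ 0 ⟨le_rfl, hτ.le⟩)
  set L : ℝ := ‖A‖ + ‖B‖ + 2 * (‖B‖ * R) with hL
  have hL0 : 0 ≤ L := by positivity
  set c : ℝ → X := fun s => cut (v s - w s) with hc
  have hcc : Continuous c := by simp only [hc]; fun_prop
  have hrem : ∀ s, ‖A (c s) + B (c s) (c s) + (2 : ℝ) • B (w s + ζ s) (c s)‖ ≤ L * ‖v s - w s‖ := by
    intro s
    have h1 : ‖A (c s)‖ ≤ ‖A‖ * ‖v s - w s‖ := A.le_opNorm_of_le (norm_cut_le _)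
    have h2 : ‖B (c s) (c s)‖ ≤ ‖B‖ * 1 * ‖v s - w s‖ :=
      B.le_of_opNorm₂_le_of_le le_rfl (norm_cut_le_one _) (norm_cut_le _)
    have h3 : ‖B (w s + ζ s) (c s)‖ ≤ ‖B‖ * R * ‖v s - w s‖ :=
      B.le_of_opNorm₂_le_of_le le_rfl (hR s) (norm_cut_le _)
    have h4 := norm_add_le (A (c s) + B (c s) (c s)) ((2 : ℝ) • B (w s + ζ s) (c s))
    have h5 := norm_add_le (A (c s)) (B (c s) (c s))
    rw [norm_smul, Real.norm_of_nonneg zero_le_two] at h4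
    rw [hL]
    linarith
  have hdiff : ∀ t ∈ Icc 0 τ, ‖v t - w t‖ ≤ δ + L * ∫ s in (0 : ℝ)..t, ‖v s - w s‖ := by
    intro t ht
    have hγt : IntervalIntegrable γ volume 0 t := hγ.mono_set (by
      rw [uIcc_of_le ht.1, uIcc_of_le hτ.le]
      exact Icc_subset_Icc_right ht.2)
    have hi1 : IntervalIntegrable (fun s => γ s - A (w s) - B (w s) (w s)) volume 0 t :=
      (hγt.sub (Continuous.intervalIntegrable (by fun_prop) _ _)).sub
        (Continuous.intervalIntegrable (by fun_prop) _ _)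
    have hi2 : IntervalIntegrable (fun s => γ' s - A (w s + c s + ζ s)
        - B (w s + c s + ζ s) (w s + c s + ζ s)) volume 0 t :=
      Continuous.intervalIntegrable (by fun_prop) _ _
    have hi3 : IntervalIntegrable (fun s => γ' s - B (ζ s) (ζ s) - γ s - A (ζ s)
        - (2 : ℝ) • B (w s) (ζ s)) volume 0 t :=
      (((Continuous.intervalIntegrable (by fun_prop) _ _).sub hγt).sub
        (Continuous.intervalIntegrable (by fun_prop) _ _)).sub
        (Continuous.intervalIntegrable (by fun_prop) _ _)
    have hi4 : IntervalIntegrable (fun s => A (c s) + B (c s) (c s) +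
        (2 : ℝ) • B (w s + ζ s) (c s)) volume 0 t :=
      Continuous.intervalIntegrable (by fun_prop) _ _
    have e : v t - w t = (∫ s in (0 : ℝ)..t, (γ' s - B (ζ s) (ζ s) - γ s - A (ζ s)
        - (2 : ℝ) • B (w s) (ζ s))) - ∫ s in (0 : ℝ)..t, (A (c s) + B (c s) (c s) +
        (2 : ℝ) • B (w s + ζ s) (c s)) := by
      rw [hv t ht, hsol t ht, add_sub_add_left_eq_sub, ← intervalIntegral.integral_sub hi2 hi1,
        ← intervalIntegral.integral_sub hi3 hi4]
      congr 1
      funext s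
      simp only [map_add, add_apply, two_smul]
      rw [hB (ζ s) (w s), hB (c s) (w s), hB (c s) (ζ s)]
      abel
    have hb : ‖∫ s in (0 : ℝ)..t, (A (c s) + B (c s) (c s) + (2 : ℝ) • B (w s + ζ s) (c s))‖
        ≤ L * ∫ s in (0 : ℝ)..t, ‖v s - w s‖ := by
      rw [← intervalIntegral.integral_const_mul]
      exact intervalIntegral.norm_integral_le_of_norm_le ht.1
        (Eventually.of_forall fun s _ => hrem s)
        (Continuous.intervalIntegrable (by fun_prop) _ _)
    rw [e]
    exact (norm_sub_le _ _).trans (add_le_add (hδ t ht) hb)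
  have hclose : ∀ t ∈ Icc 0 τ, ‖v t - w t‖ ≤ δ * Real.exp (L * τ) := fun t ht => by
    refine (gronwall_integral (by fun_prop) hL0 hdiff t ht).trans ?_
    have := ht.2
    gcongr
  refine ⟨v, hvc, fun t ht => ?_, fun t ht => ?_⟩
  · -- the truncation is inactive along `v`
    rw [hv t ht]
    congr 1
    refine integral_congr fun s hs => ?_
    rw [uIcc_of_le ht.1] at hs
    have hs1 : ‖v s - w s‖ ≤ 1 := (hclose s ⟨hs.1, hs.2.trans ht.2⟩).trans hsmall
    simp only [cut_eq_self hs1, add_sub_cancel]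
  · rw [norm_sub_rev]
    exact hclose t ht

end Perturbation

/-! ### The controls -/

/-- A piecewise constant force with values in `E''` splits as `η₀ - ∑ f(ηᵢ)` with bounded
measurable `E'`-valued functions `ηᵢ`. -/
lemma exists_step_decomposition {X : Type*} [NormedAddCommGroup X] [NormedSpace ℝ X]
    (Γ : X →ₗ[ℝ] X →ₗ[ℝ] X) {τ : ℝ} (E' E'' : Submodule ℝ X)
    (hsat : ∀ γ ∈ E'', ∃ (p : ℕ) (ξ : ℕ → X), (∀ j ≤ p, ξ j ∈ E') ∧
      γ = ξ 0 - ∑ i ∈ Finset.Icc 1 p, Γ (ξ i) (ξ i))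
    (γ : ℝ → X)
    (hγpc : ∃ (m : ℕ) (a : ℕ → ℝ) (cst : ℕ → X), 0 < m ∧ a 0 = 0 ∧ a m = τ ∧
      (∀ j < m, a j < a (j + 1)) ∧ (∀ j < m, cst j ∈ E'') ∧
      ∀ j < m, ∀ s ∈ Ico (a j) (a (j + 1)), γ s = cst j) :
    ∃ (P : ℕ) (η : ℕ → ℝ → E'), (∀ i, StronglyMeasurable (η i)) ∧
      (∀ i, ∃ M, ∀ s, ‖η i s‖ ≤ M) ∧
      ∀ s ∈ Ico 0 τ, γ s = (η 0 s : X) -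
        ∑ i ∈ Finset.Icc 1 P, Γ (η i s : X) (η i s : X) := by
  obtain ⟨m, a, cst, hm, ha0, ham, hlt, hcst, hγ⟩ := hγpc
  have hex : ∀ j, ∃ (p : ℕ) (ξ : ℕ → X), (∀ i ≤ p, ξ i ∈ E') ∧
      (j < m → cst j = ξ 0 - ∑ i ∈ Finset.Icc 1 p, Γ (ξ i) (ξ i)) := fun j => by
    by_cases hj : j < m
    · obtain ⟨p, ξ, h1, h2⟩ := hsat _ (hcst j hj)
      exact ⟨p, ξ, h1, fun _ => h2⟩
    · exact ⟨0, fun _ => 0, fun _ _ => E'.zero_mem, fun h => absurd h hj⟩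
  choose p ξ hξ hξeq using hex
  let x : ℕ → ℕ → E' := fun j i => if h : i ≤ p j then ⟨ξ j i, hξ j i h⟩ else 0
  have hx : ∀ j i, i ≤ p j → (x j i : X) = ξ j i := fun j i h => by simp [x, h]
  have hx0 : ∀ j i, ¬ i ≤ p j → (x j i : X) = 0 := fun j i h => by simp [x, h]
  -- the index of the interval containing `s`, as the number of right endpoints passed
  let J : ℝ → ℕ := fun s => ∑ j ∈ Finset.range m, (Ici (a (j + 1))).indicator (fun _ => 1) s
  have hJm : Measurable J := by
    refine Finset.measurable_sum _ fun j _ => ?_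
    exact measurable_const.indicator measurableSet_Ici
  have hJle : ∀ s, J s ≤ m := fun s => by
    calc J s ≤ ∑ j ∈ Finset.range m, 1 := Finset.sum_le_sum fun j _ => by
          by_cases h : s ∈ Ici (a (j + 1)) <;> simp [indicator, h]
      _ = m := by simp
  have hmono : ∀ i j, i ≤ j → j ≤ m → a i ≤ a j := fun i j hij hj => by
    induction j, hij using Nat.le_induction with
    | base => exact le_rfl
    | succ n hn ih => exact (ih (by omega)).trans (hlt n (by omega)).le
  have hJ : ∀ j < m, ∀ s ∈ Ico (a j) (a (j + 1)), J s = j := fun j hj s hs => by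
    have h1 : J s = ∑ i ∈ Finset.range m, if i < j then 1 else 0 := by
      refine Finset.sum_congr rfl fun i hi => ?_
      rw [Finset.mem_range] at hi
      by_cases hij : i < j
      · have : a (i + 1) ≤ s := (hmono (i + 1) j hij hj.le).trans hs.1
        simp [indicator, hij, this]
      · have : s < a (i + 1) := hs.2.trans_le (hmono (j + 1) (i + 1) (by omega) hi)
        simp [indicator, hij, this]
    rw [h1, Finset.sum_boole]
    have : (Finset.range m).filter (fun i => i < j) = Finset.range j := by
      ext i
      simp only [Finset.mem_filter, Finset.mem_range]
      omega
    rw [this]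
    simp
  have hcover : ∀ n ≤ m, ∀ s ∈ Ico 0 (a n), ∃ j < n, s ∈ Ico (a j) (a (j + 1)) := by
    intro n
    induction n with
    | zero => intro _ s hs; rw [ha0] at hs; exact absurd hs.2 (not_lt.2 hs.1)
    | succ n ih =>
      intro hn s hs
      by_cases h : s < a n
      · obtain ⟨j, hj, hjs⟩ := ih (by omega) s ⟨hs.1, h⟩
        exact ⟨j, by omega, hjs⟩
      · exact ⟨n, by omega, not_lt.1 h, hs.2⟩
  refine ⟨(Finset.range m).sup p, fun i s => x (J s) i, fun i => ?_, fun i => ?_, fun s hs => ?_⟩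
  · exact (StronglyMeasurable.of_discrete (f := fun j : ℕ => x j i)).comp_measurable hJm
  · refine ⟨∑ j ∈ Finset.range (m + 1), ‖x j i‖, fun s => ?_⟩
    exact Finset.single_le_sum (f := fun j => ‖x j i‖) (fun _ _ => norm_nonneg _)
      (Finset.mem_range.2 (Nat.lt_succ_of_le (hJle s)))
  · rw [← ham] at hs
    obtain ⟨j, hj, hjs⟩ := hcover m le_rfl s hs
    have hpj : p j ≤ (Finset.range m).sup p := Finset.le_sup (Finset.mem_range.2 hj)
    simp only [hJ j hj s hjs]
    rw [hγ j hj s hjs, hξeq j hj, hx j 0 (Nat.zero_le _)]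
    congr 1
    rw [← Finset.sum_subset (Finset.Icc_subset_Icc_right hpj)]
    · refine Finset.sum_congr rfl fun i hi => ?_
      rw [hx j i (Finset.mem_Icc.1 hi).2]
    · intro i hi hi'
      have : ¬ i ≤ p j := fun h => hi' (Finset.mem_Icc.2 ⟨(Finset.mem_Icc.1 hi).1, h⟩)
      rw [hx0 j i this, map_zero]

section Osc

variable {X : Type*} [NormedAddCommGroup X] [NormedSpace ℝ X]

/-- The oscillating control `√2 ∑ᵢ cos (k i s) hᵢ(s)`; different profiles `hᵢ` oscillate at
different frequencies, so that their interactions in a quadratic term average out. -/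
def osc (P : ℕ) (h : ℕ → ℕ → ℝ → X) (k : ℕ) (s : ℝ) : X :=
  √2 • ∑ i ∈ Finset.Icc 1 P, Real.cos (k * (i : ℝ) * s) • h i k s

lemma clm_osc {Y : Type*} [NormedAddCommGroup Y] [NormedSpace ℝ Y] (L : X →L[ℝ] Y) (P : ℕ)
    (h : ℕ → ℕ → ℝ → X) (k : ℕ) (s : ℝ) :
    L (osc P h k s) = √2 • ∑ i ∈ Finset.Icc 1 P, Real.cos (k * (i : ℝ) * s) • L (h i k s) := by
  simp [osc, map_sum]

lemma norm_osc_le {P : ℕ} {h : ℕ → ℕ → ℝ → X} {M : ℕ → ℝ} (hM : ∀ i k s, ‖h i k s‖ ≤ M i)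
    (k : ℕ) (s : ℝ) : ‖osc P h k s‖ ≤ √2 * ∑ i ∈ Finset.Icc 1 P, M i := by
  rw [osc, norm_smul, Real.norm_of_nonneg (Real.sqrt_nonneg 2)]
  gcongr
  refine norm_sum_le_of_le _ fun i _ => ?_
  rw [norm_smul]
  exact (mul_le_of_le_one_left (norm_nonneg _) (Real.abs_cos_le_one _)).trans (hM i k s)

lemma bilin_osc (B : X →L[ℝ] X →L[ℝ] X) (P : ℕ) (h : ℕ → ℕ → ℝ → X) (k : ℕ) (s : ℝ) :
    B (osc P h k s) (osc P h k s) = ∑ i ∈ Finset.Icc 1 P, ∑ l ∈ Finset.Icc 1 P,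
      (Real.cos (k * ((i : ℝ) - l) * s) • B (h i k s) (h l k s)
        + Real.cos (k * ((i : ℝ) + l) * s) • B (h i k s) (h l k s)) := by
  have h2 : √2 * √2 = 2 := Real.mul_self_sqrt zero_le_two
  have e : ∀ i l : ℕ, Real.cos (k * ((i : ℝ) - l) * s) + Real.cos (k * ((i : ℝ) + l) * s)
      = √2 * √2 * (Real.cos (k * (i : ℝ) * s) * Real.cos (k * (l : ℝ) * s)) := fun i l => by
    have e1 : k * ((i : ℝ) - l) * s = k * (i : ℝ) * s - k * (l : ℝ) * s := by ring
    have e2 : k * ((i : ℝ) + l) * s = k * (i : ℝ) * s + k * (l : ℝ) * s := by ring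
    rw [h2, e1, e2, Real.cos_sub, Real.cos_add]
    ring
  simp only [← add_smul, e]
  simp only [osc, map_smul, map_sum, smul_apply, sum_apply,
    Finset.smul_sum, smul_smul]
  rw [Finset.sum_comm]
  refine Finset.sum_congr rfl fun i _ => Finset.sum_congr rfl fun l _ => ?_
  congr 1
  ring

lemma vanish_osc [CompleteSpace X] {P : ℕ} {h : ℕ → ℕ → ℝ → X} (τ : ℝ)
    {G : ℕ → ℝ → X} (hh : ∀ i, BConv (h i) (G i)) : Vanish τ (osc P h) := by
  refine Vanish.const_smul _ (Vanish.sum _ fun i hi => ?_)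
  have hi0 : (i : ℝ) ≠ 0 := by
    have := (Finset.mem_Icc.1 hi).1
    exact_mod_cast (by omega : i ≠ 0)
  exact (hh i).vanish_cos_smul τ hi0

/-- The quadratic term of the oscillating control converges in the relaxation norm to the sum of
the quadratic terms of its profiles: off-diagonal products have no resonance. -/
lemma vanish_bilin_osc [CompleteSpace X] (B : X →L[ℝ] X →L[ℝ] X) {P : ℕ} {h : ℕ → ℕ → ℝ → X}
    (τ : ℝ) {η : ℕ → ℝ → X} (hh : ∀ i, BConv (h i) (η i)) :
    Vanish τ (fun k s => B (osc P h k s) (osc P h k s) -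
      ∑ i ∈ Finset.Icc 1 P, B (η i s) (η i s)) := by
  have key : Vanish τ (fun k s => ∑ i ∈ Finset.Icc 1 P, ∑ l ∈ Finset.Icc 1 P,
      ((Real.cos (k * ((i : ℝ) - l) * s) • B (h i k s) (h l k s)
          - if i = l then B (η i s) (η i s) else 0)
        + Real.cos (k * ((i : ℝ) + l) * s) • B (h i k s) (h l k s))) := by
    refine Vanish.sum _ fun i hi => Vanish.sum _ fun l hl => Vanish.add ?_ ?_
    · by_cases hil : i = l
      · subst hil
        simpa using ((hh i).bilin B (hh i)).vanish τ
      · have hne : (i : ℝ) - l ≠ 0 := sub_ne_zero.2 (by exact_mod_cast hil)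
        simpa [hil] using ((hh i).bilin B (hh l)).vanish_cos_smul τ hne
    · have hne : (i : ℝ) + l ≠ 0 := by
        have := (Finset.mem_Icc.1 hi).1
        exact_mod_cast (by omega : i + l ≠ 0)
      exact ((hh i).bilin B (hh l)).vanish_cos_smul τ hne
  refine Eq.mp ?_ key
  congr 1
  funext k s
  rw [bilin_osc, ← Finset.sum_sub_distrib]
  refine Finset.sum_congr rfl fun i hi => ?_
  have e : B (η i s) (η i s) =
      ∑ l ∈ Finset.Icc 1 P, if i = l then B (η i s) (η i s) else 0 := by
    rw [Finset.sum_ite_eq, if_pos hi]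
  nth_rewrite 2 [e]
  rw [← Finset.sum_sub_distrib]
  refine Finset.sum_congr rfl fun l _ => ?_
  abel

end Osc

lemma biSup_le_of_forall {τ C : ℝ} (hC : 0 ≤ C) {f : ℝ → ℝ} (h : ∀ t ∈ Icc 0 τ, f t ≤ C) :
    ⨆ t ∈ Icc (0 : ℝ) τ, f t ≤ C :=
  Real.iSup_le (fun t => Real.iSup_le (h t) hC) hC

/-- Approximation result (Proposition 5.1): solutions of
`ẇ + Aw + f(w) = γ` with `γ` piecewise constant with values in `E''` can be approximated,
uniformly on `[0,τ]`, by solutions of the enlarged system driven by `E'`-valued additive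
controls `γ_n` and `E'`-valued multiplicative controls `ζ_n` which vanish asymptotically
in the relaxation norm, where every element of `E''` is of the form
`ξ₀ − Σ f(ξᵢ)` with `ξ₀, …, ξ_p ∈ E'`. -/
theorem approximation_enlarged_system
    {X : Type*}
    [NormedAddCommGroup X] [InnerProductSpace ℝ X] [FiniteDimensional ℝ X]
    (A : X →ₗ[ℝ] X) (Γ : X →ₗ[ℝ] X →ₗ[ℝ] X) (hΓ : ∀ a b : X, Γ a b = Γ b a)
    (τ : ℝ) (hτ : 0 < τ)
    (E' E'' : Submodule ℝ X)
    (hsat : ∀ γ ∈ E'', ∃ (p : ℕ) (ξ : ℕ → X), (∀ j ≤ p, ξ j ∈ E') ∧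
      γ = ξ 0 - ∑ i ∈ Finset.Icc 1 p, Γ (ξ i) (ξ i))
    (γ : ℝ → X)
    (hγpc : ∃ (m : ℕ) (a : ℕ → ℝ) (cst : ℕ → X), 0 < m ∧ a 0 = 0 ∧ a m = τ ∧
      (∀ j < m, a j < a (j + 1)) ∧ (∀ j < m, cst j ∈ E'') ∧
      ∀ j < m, ∀ s ∈ Ico (a j) (a (j + 1)), γ s = cst j)
    (w₀ : X) (w : ℝ → X)
    (hw : ContinuousOn w (Icc 0 τ))
    (hwsol : ∀ t ∈ Icc (0:ℝ) τ,
      w t = w₀ + ∫ s in (0:ℝ)..t, (γ s - A (w s) - Γ (w s) (w s))) :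
    ∃ γn ζn : ℕ → ℝ → X,
      (∀ k, ContDiffOn ℝ (⊤ : ℕ∞) (γn k) (Icc 0 τ) ∧ ContDiffOn ℝ (⊤ : ℕ∞) (ζn k) (Icc 0 τ)) ∧
      (∀ k, ∀ t ∈ Icc (0:ℝ) τ, γn k t ∈ E' ∧ ζn k t ∈ E') ∧
      (∃ K : ℝ, ∀ k, (⨆ t ∈ Icc (0:ℝ) τ, ‖ζn k t‖)
        + (eLpNorm (γn k) 2 (volume.restrict (Ioc 0 τ))).toReal ≤ K) ∧
      ∀ ε > (0:ℝ), ∃ N : ℕ, ∀ k ≥ N, ∃ wk : ℝ → X,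
        ContinuousOn wk (Icc 0 τ) ∧
        (∀ t ∈ Icc (0:ℝ) τ, wk t = w₀ + ∫ s in (0:ℝ)..t,
          (γn k s - A (wk s + ζn k s) - Γ (wk s + ζn k s) (wk s + ζn k s))) ∧
        (⨆ t ∈ Icc (0:ℝ) τ, ‖w t - wk t‖)
          + (⨆ t ∈ Icc (0:ℝ) τ, ‖∫ s in (0:ℝ)..t, ζn k s‖) < ε := by
  -- continuous versions of the coefficients, and a global continuous bounded version of `w`
  set A' : X →L[ℝ] X := LinearMap.toContinuousLinearMap A with hA'
  set B : X →L[ℝ] X →L[ℝ] X := Γ.toContinuousBilinearMap with hBdef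
  have hAa : ∀ x, A x = A' x := fun _ => rfl
  have hBa : ∀ x y, Γ x y = B x y := fun _ _ => rfl
  have hBs : ∀ a b, B a b = B b a := hΓ
  obtain ⟨P, η, hηm, hηb, hγη⟩ := exists_step_decomposition Γ E' E'' hsat γ hγpc
  choose M hM using hηb
  choose h hsm hhb hlim using fun i => exists_smooth_approx (hηm i).aestronglyMeasurable (hM i)
  have hbc' : ∀ i, BConv (h i) (η i) := fun i =>
    ⟨fun k => (hsm i k).continuous.aestronglyMeasurable, ⟨M i, hhb i, hM i⟩, hlim i⟩
  have hbc : ∀ i, BConv (fun k s => (h i k s : X)) (fun s => (η i s : X)) := fun i =>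
    (hbc' i).clm E'.subtypeL
  obtain ⟨Rw, hRw⟩ := isCompact_Icc.exists_bound_of_continuousOn (s := Icc 0 τ) hw
  set W : ℝ → X := IccExtend hτ.le ((Icc 0 τ).domRestrict w) with hW
  have hWc : Continuous W := (continuousOn_iff_continuous_domRestrict.1 hw).Icc_extend'
  have hWeq : ∀ s ∈ Icc 0 τ, W s = w s := fun s hs => by
    rw [hW, IccExtend_of_mem _ _ hs, domRestrict_apply]
  have hWb : ∀ s, ‖W s‖ ≤ Rw := fun s => hRw _ (projIcc 0 τ hτ.le s).2
  set γ' : ℝ → X := fun s => (η 0 s : X) - ∑ i ∈ Finset.Icc 1 P, B (η i s) (η i s) with hγ'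
  have hγ'int : IntervalIntegrable γ' volume 0 τ := by
    have hc : ∀ i, IntervalIntegrable (fun s => B (η i s : X) (η i s : X)) volume 0 τ := fun i => by
      have hb := (hbc i).bilin B (hbc i)
      obtain ⟨C, -, hC⟩ := hb.bdd
      exact (BConv.const hb.meas_lim hC).intervalIntegrable 0 0 τ
    refine IntervalIntegrable.sub ?_ ?_
    · exact (BConv.const (hbc 0).meas_lim (hM 0)).intervalIntegrable 0 0 τ
    · have hs := IntervalIntegrable.sum (Finset.Icc 1 P)
        (f := fun i s => B (η i s : X) (η i s : X)) fun i _ => hc i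
      have e : (fun s => ∑ i ∈ Finset.Icc 1 P, B (η i s : X) (η i s : X)) =
          ∑ i ∈ Finset.Icc 1 P, fun s => B (η i s : X) (η i s : X) := by
        funext s
        simp only [Finset.sum_apply]
      rw [e]
      exact hs
  have hWsol : ∀ t ∈ Icc 0 τ, W t = w₀ + ∫ s in (0 : ℝ)..t,
      (γ' s - A' (W s) - B (W s) (W s)) := fun t ht => by
    rw [hWeq t ht, hwsol t ht]
    congr 1
    refine integral_congr_ae ?_
    have hne : ∀ᵐ s : ℝ, s ≠ τ := compl_mem_ae_iff.2 (measure_singleton τ)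
    filter_upwards [hne] with s hsτ hs
    rw [uIoc_of_le ht.1] at hs
    have hs' : s < τ := lt_of_le_of_ne (hs.2.trans ht.2) hsτ
    rw [hWeq s ⟨hs.1.le, hs'.le⟩, hγη s ⟨hs.1.le, hs'⟩]
    rfl
  set ζ : ℕ → ℝ → X := osc P (fun i k s => (h i k s : X)) with hζ
  set Rζ : ℝ := √2 * ∑ i ∈ Finset.Icc 1 P, M i with hRζ
  have hζb : ∀ k s, ‖ζ k s‖ ≤ Rζ := norm_osc_le hhb
  have hRζ0 : 0 ≤ Rζ := (norm_nonneg _).trans (hζb 0 0)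
  have hhX : ∀ i k, ContDiff ℝ (⊤ : ℕ∞) (fun s => (h i k s : X)) := fun i k =>
    E'.subtypeL.contDiff.comp (hsm i k)
  have hζs : ∀ k, ContDiff ℝ (⊤ : ℕ∞) (ζ k) := fun k => by
    refine ContDiff.const_smul _ (ContDiff.sum fun i _ => ContDiff.smul ?_ (hhX i k))
    exact Real.contDiff_cos.comp (contDiff_const.mul contDiff_id)
  have hvζ : Vanish τ ζ := vanish_osc τ hbc
  have hvdef : Vanish τ (fun k s => (h 0 k s : X) - B (ζ k s) (ζ k s) - γ' s - A' (ζ k s)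
      - (2 : ℝ) • B (W s) (ζ k s)) := by
    have hWζ : Vanish τ (fun k s => B (W s) (ζ k s)) := by
      have e : (fun (k : ℕ) (s : ℝ) => B (W s) (ζ k s)) =
          osc P (fun i k s => B (W s) (h i k s : X)) := by
        funext k s
        exact clm_osc (B (W s)) P _ k s
      rw [e]
      exact vanish_osc τ fun i =>
        (BConv.const hWc.aestronglyMeasurable hWb).bilin B (hbc i)
    have := (((((hbc 0).vanish τ).sub (vanish_bilin_osc B (P := P) τ hbc)).sub
      (hvζ.clm A')).sub (hWζ.const_smul 2))
    refine Eq.mp ?_ this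
    congr 1
    funext k s
    simp only [hγ']
    abel
  refine ⟨fun k s => (h 0 k s : X), ζ, fun k => ⟨(hhX 0 k).contDiffOn, (hζs k).contDiffOn⟩,
    fun k t _ => ⟨(h 0 k t).2, ?_⟩, ?_, ?_⟩
  · exact E'.smul_mem _ (E'.sum_mem fun i _ => E'.smul_mem _ (h i k t).2)
  · refine ⟨Rζ + ((volume.restrict (Ioc 0 τ)) univ ^ (2 : ℝ≥0∞).toReal⁻¹ *
      ENNReal.ofReal (M 0)).toReal, fun k => add_le_add ?_ ?_⟩
    · exact biSup_le_of_forall hRζ0 fun t _ => hζb k t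
    · refine ENNReal.toReal_mono ?_ (eLpNorm_le_of_ae_bound (Eventually.of_forall (hhb 0 k)))
      exact ENNReal.mul_ne_top (ENNReal.rpow_ne_top_of_nonneg (by positivity) (by simp))
        ENNReal.ofReal_ne_top
  · intro ε hε
    set D : ℝ := Real.exp ((‖A'‖ + ‖B‖ + 2 * (‖B‖ * (Rw + Rζ))) * τ) with hD
    have hD0 : 0 < D := Real.exp_pos _
    have hmin : 0 < min 1 (ε / 4) := lt_min one_pos (by positivity)
    obtain ⟨N, hN⟩ := hvdef.2 (min 1 (ε / 4) / D) (by positivity)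
    obtain ⟨N', hN'⟩ := hvζ.2 (ε / 4) (by positivity)
    refine ⟨max N N', fun k hk => ?_⟩
    have hDm : min 1 (ε / 4) / D * D = min 1 (ε / 4) := div_mul_cancel₀ _ hD0.ne'
    obtain ⟨v, hvc, hvsol, hvb⟩ := exists_solution_near A' B hBs hτ hWc hγ'int hWsol
      (hζs k).continuous (hhX 0 k).continuous
      (fun s => (norm_add_le _ _).trans (add_le_add (hWb s) (hζb k s)))
      (hN k (le_of_max_le_left hk)) (by rw [← hD, hDm]; exact min_le_left _ _)
    refine ⟨v, hvc.continuousOn, hvsol, ?_⟩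
    rw [← hD, hDm] at hvb
    have h1 : (⨆ t ∈ Icc (0 : ℝ) τ, ‖w t - v t‖) ≤ ε / 4 :=
      biSup_le_of_forall (by positivity) fun t ht => by
        rw [← hWeq t ht]
        exact (hvb t ht).trans (min_le_right _ _)
    have h2 : (⨆ t ∈ Icc (0 : ℝ) τ, ‖∫ s in (0 : ℝ)..t, ζ k s‖) ≤ ε / 4 :=
      biSup_le_of_forall (by positivity) fun t ht => hN' k (le_of_max_le_right hk) t ht
    linarith
end
end

section
/- Let X be a finite-dimensional real inner product space, A : X → X linear, φ : X → X continuous, τ > 0, ξ ∈ X, and w₁ ∈ C([0,τ];X). For n ∈ ℕ define ζ_n : [0,τ] → X by ζ_n(t) = ξ if the fractional part of n t / τ lies in [0, 1/2) and ζ_n(t) = −ξ if it lies in [1/2, 1), and set h_n(t) = φ(w₁(t) + ζ_n(t)) − (1/2)(φ(w₁(t) + ξ) + φ(w₁(t) − ξ)) + A ζ_n(t). Then sup_{t∈[0,τ]} ‖∫₀ᵗ h_n(s) ds‖ → 0 as n → ∞. -/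
/-!
The integrand factors as `h_n(s) = σ(n s / τ) • g(s)`, where `σ = ±1` is the square wave of period `1`
and `g = ½(φ(w₁ + ξ) - φ(w₁ - ξ)) + A ξ` is continuous on `[0, τ]`, hence extends to a bounded
uniformly continuous function `G` on the line. A shift by half a period `δ = τ / (2n)` flips the
sign of the wave, so
`2 ∫₀ᵗ σ G = ∫₀ᵗ σ(s) (G(s) - G(s - δ)) ds + ∫₀^δ σ(s) G(s - δ) ds - ∫ₜ^{t+δ} σ(s) G(s - δ) ds`,
whose norm is at most `τ · ω_G(δ) + 2 M δ`, with `ω_G` the modulus of continuity of `G` and `M` a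
bound for `‖G‖` (`norm_integral_smul_le_of_antiperiodic`). This bound does not depend on `t` and tends to `0`
as `n → ∞`.
-/

open MeasureTheory Set intervalIntegral
open scoped ENNReal

noncomputable section

/-- The square wave of period `1`, equal to `1` on `[0, 1/2)` and to `-1` on `[1/2, 1)`. -/
def squareWave (x : ℝ) : ℝ := if Int.fract x < 1 / 2 then 1 else -1

lemma squareWave_add_half (x : ℝ) : squareWave (x + 1 / 2) = -squareWave x := by
  have h0 := Int.fract_nonneg x
  have h1 := Int.fract_lt_one x
  have hx := Int.floor_add_fract x
  unfold squareWave
  by_cases h : Int.fract x < 1 / 2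
  · have : Int.fract (x + 1 / 2) = Int.fract x + 1 / 2 :=
      Int.fract_eq_iff.2 ⟨by linarith, by linarith, ⌊x⌋, by linarith⟩
    rw [this, if_pos h, if_neg (by linarith)]
  · push Not at h
    have : Int.fract (x + 1 / 2) = Int.fract x - 1 / 2 :=
      Int.fract_eq_iff.2 ⟨by linarith, by linarith, ⌊x⌋ + 1, by push_cast; linarith⟩
    rw [this, if_pos (by linarith), if_neg (by linarith), neg_neg]

lemma abs_squareWave (x : ℝ) : |squareWave x| = 1 := by
  unfold squareWave
  split_ifs <;> simp

lemma measurable_squareWave : Measurable squareWave :=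
  Measurable.ite (measurableSet_lt measurable_fract measurable_const) measurable_const
    measurable_const

/-- Integrating against a wave `σ` with `σ(s + δ) = -σ(s)`, one averages the integral with its
translate by `δ`; only an increment of `G` and two boundary pieces of length `δ` survive. -/
lemma norm_integral_smul_le_of_antiperiodic {X : Type*} [NormedAddCommGroup X] [NormedSpace ℝ X]
    {σ : ℝ → ℝ} (hσm : Measurable σ) (hσ : ∀ s, |σ s| = 1) {δ : ℝ} (hδ : 0 ≤ δ)
    (hanti : ∀ s, σ (s + δ) = -σ s) {G : ℝ → X} (hG : Continuous G) {M η : ℝ}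
    (hM : ∀ s, ‖G s‖ ≤ M) (hη : ∀ s, ‖G s - G (s - δ)‖ ≤ η) {t : ℝ} (ht : 0 ≤ t) :
    ‖∫ s in (0:ℝ)..t, σ s • G s‖ ≤ (η * t + 2 * (M * δ)) / 2 := by
  have hint : ∀ {F : ℝ → X}, Continuous F → ∀ a b : ℝ,
      IntervalIntegrable (fun s => σ s • F s) volume a b := by
    intro F hF a b
    refine (hF.intervalIntegrable a b).mono_fun ?_ ?_
    · exact hσm.aestronglyMeasurable.smul (hF.intervalIntegrable a b).aestronglyMeasurable_restrict_uIoc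
    · exact Filter.Eventually.of_forall fun s => by simp [norm_smul, hσ]
  have hG' : Continuous fun s => G (s - δ) := hG.comp (continuous_id.sub continuous_const)
  have hshift : ∫ s in (0:ℝ)..t, σ s • G s = -∫ s in δ..(t + δ), σ s • G (s - δ) := by
    have := intervalIntegral.integral_comp_add_right (a := 0) (b := t)
      (fun s => σ s • G (s - δ)) δ
    rw [zero_add] at this
    rw [← this, ← intervalIntegral.integral_neg]
    simp [hanti]
  have hsplit : (∫ s in (0:ℝ)..δ, σ s • G (s - δ)) + (∫ s in δ..(t + δ), σ s • G (s - δ))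
      = (∫ s in (0:ℝ)..t, σ s • G (s - δ)) + ∫ s in t..(t + δ), σ s • G (s - δ) := by
    rw [intervalIntegral.integral_add_adjacent_intervals (hint hG' _ _) (hint hG' _ _),
      intervalIntegral.integral_add_adjacent_intervals (hint hG' _ _) (hint hG' _ _)]
  have hdiff : ∫ s in (0:ℝ)..t, σ s • (G s - G (s - δ))
      = (∫ s in (0:ℝ)..t, σ s • G s) - ∫ s in (0:ℝ)..t, σ s • G (s - δ) := by
    rw [← intervalIntegral.integral_sub (hint hG _ _) (hint hG' _ _)]
    simp only [smul_sub]
  have key : (2:ℝ) • ∫ s in (0:ℝ)..t, σ s • G s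
      = (∫ s in (0:ℝ)..t, σ s • (G s - G (s - δ))) + (∫ s in (0:ℝ)..δ, σ s • G (s - δ))
        - ∫ s in t..(t + δ), σ s • G (s - δ) := by
    rw [two_smul, hdiff]
    nth_rewrite 2 [hshift]
    rw [eq_sub_of_add_eq' hsplit]
    abel
  have b1 : ‖∫ s in (0:ℝ)..t, σ s • (G s - G (s - δ))‖ ≤ η * |t - 0| :=
    intervalIntegral.norm_integral_le_of_norm_le_const fun s _ => by
      simpa [norm_smul, hσ] using hη s
  have b2 : ∀ a b : ℝ, ‖∫ s in a..b, σ s • G (s - δ)‖ ≤ M * |b - a| := fun a b =>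
    intervalIntegral.norm_integral_le_of_norm_le_const fun s _ => by
      simpa [norm_smul, hσ] using hM (s - δ)
  have b3 := b2 0 δ
  have b4 := b2 t (t + δ)
  rw [sub_zero, abs_of_nonneg ht] at b1
  rw [sub_zero, abs_of_nonneg hδ] at b3
  rw [add_sub_cancel_left, abs_of_nonneg hδ] at b4
  have h2 : ‖(2:ℝ) • ∫ s in (0:ℝ)..t, σ s • G s‖ = 2 * ‖∫ s in (0:ℝ)..t, σ s • G s‖ := by
    rw [norm_smul]; norm_num
  rw [key] at h2
  have h3 := norm_sub_le ((∫ s in (0:ℝ)..t, σ s • (G s - G (s - δ)))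
    + (∫ s in (0:ℝ)..δ, σ s • G (s - δ))) (∫ s in t..(t + δ), σ s • G (s - δ))
  have h4 := norm_add_le (∫ s in (0:ℝ)..t, σ s • (G s - G (s - δ)))
    (∫ s in (0:ℝ)..δ, σ s • G (s - δ))
  linarith

/-- (Lemma 5.2.) For the fast-oscillating square waves
`ζ_n(t) = ±ξ` (sign depending on whether the fractional part of `n t / τ` lies in
`[0,1/2)` or `[1/2,1)`), the primitives of
`h_n = φ(w₁+ζ_n) − ½(φ(w₁+ξ)+φ(w₁−ξ)) + Aζ_n` converge uniformly to zero on `[0,τ]`. -/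
theorem relaxation_lemma_square_wave
    {X : Type*}
    [NormedAddCommGroup X] [InnerProductSpace ℝ X] [FiniteDimensional ℝ X]
    (A : X →ₗ[ℝ] X) (φ : X → X) (hφ : Continuous φ)
    (τ : ℝ) (hτ : 0 < τ) (ξ : X)
    (w₁ : ℝ → X) (hw₁ : ContinuousOn w₁ (Icc 0 τ)) :
    Filter.Tendsto
      (fun n : ℕ => ⨆ t ∈ Icc (0:ℝ) τ, ‖∫ s in (0:ℝ)..t,
        (φ (w₁ s + (if Int.fract ((n : ℝ) * s / τ) < 1/2 then ξ else -ξ))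
          - (1/2 : ℝ) • (φ (w₁ s + ξ) + φ (w₁ s - ξ))
          + A (if Int.fract ((n : ℝ) * s / τ) < 1/2 then ξ else -ξ))‖)
      Filter.atTop (nhds 0) := by
  have hg : ContinuousOn
      (fun s => (1/2 : ℝ) • (φ (w₁ s + ξ) - φ (w₁ s - ξ)) + A ξ) (Icc 0 τ) :=
    (((hφ.comp_continuousOn (hw₁.add continuousOn_const)).sub
      (hφ.comp_continuousOn (hw₁.sub continuousOn_const))).const_smul _).add continuousOn_const
  set g : ℝ → X := fun s => (1/2 : ℝ) • (φ (w₁ s + ξ) - φ (w₁ s - ξ)) + A ξ with hgdef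
  set G : ℝ → X := IccExtend hτ.le ((Icc 0 τ).domRestrict g) with hGdef
  have hGu : UniformContinuous G :=
    (CompactSpace.uniformContinuous_of_continuous hg.domRestrict).comp
      (LipschitzWith.projIcc hτ.le).uniformContinuous
  have hGg : ∀ s ∈ Icc (0:ℝ) τ, G s = g s := fun s hs => by
    rw [hGdef, IccExtend_of_mem hτ.le _ hs, domRestrict_apply]
  obtain ⟨M, hM⟩ := isCompact_Icc.exists_bound_of_continuousOn hg
  have hGM : ∀ s, ‖G s‖ ≤ M := fun s => hM _ (projIcc 0 τ hτ.le s).2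
  have hM0 : 0 ≤ M := (norm_nonneg _).trans (hGM 0)
  have hfac : ∀ (n : ℕ), ∀ s ∈ Icc (0:ℝ) τ,
      φ (w₁ s + (if Int.fract ((n : ℝ) * s / τ) < 1/2 then ξ else -ξ))
          - (1/2 : ℝ) • (φ (w₁ s + ξ) + φ (w₁ s - ξ))
          + A (if Int.fract ((n : ℝ) * s / τ) < 1/2 then ξ else -ξ)
        = squareWave ((n : ℝ) * s / τ) • G s := by
    intro n s hs
    rw [hGg s hs, hgdef]
    unfold squareWave
    split_ifs
    · module
    · rw [map_neg, ← sub_eq_add_neg (w₁ s) ξ]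
      module
  rw [Metric.tendsto_atTop]
  intro ε hε
  -- an increment at most `ε / (2τ)` contributes at most `ε / 4` after halving; so do the boundary pieces
  obtain ⟨d, hd, hdG⟩ := Metric.uniformContinuous_iff.1 hGu (ε / (2 * τ)) (by positivity)
  have hlim : Filter.Tendsto (fun n : ℕ => τ / 2 / (n : ℝ)) Filter.atTop (nhds 0) :=
    tendsto_const_div_atTop_nhds_zero_nat _
  have hev := (hlim.eventually_lt_const
    (lt_min hd (show 0 < ε / (4 * (M + 1)) by positivity))).and (Filter.eventually_gt_atTop 0)
  obtain ⟨N, hN⟩ := Filter.eventually_atTop.1 hev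
  refine ⟨N, fun n hn => ?_⟩
  obtain ⟨hδ, hn0⟩ := hN n hn
  have hn0' : (0:ℝ) < n := Nat.cast_pos.2 hn0
  set δ : ℝ := τ / 2 / (n : ℝ) with hδdef
  have hδ0 : 0 < δ := by positivity
  have hδd : δ < d := hδ.trans_le (min_le_left _ _)
  have hδM : M * δ ≤ ε / 4 := by
    have h1 := (lt_div_iff₀ (by positivity)).1 (hδ.trans_le (min_le_right _ _))
    nlinarith
  have hbound : ∀ t ∈ Icc (0:ℝ) τ, ‖∫ s in (0:ℝ)..t,
        (φ (w₁ s + (if Int.fract ((n : ℝ) * s / τ) < 1/2 then ξ else -ξ))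
          - (1/2 : ℝ) • (φ (w₁ s + ξ) + φ (w₁ s - ξ))
          + A (if Int.fract ((n : ℝ) * s / τ) < 1/2 then ξ else -ξ))‖ ≤ ε / 2 := by
    intro t ht
    rw [intervalIntegral.integral_congr
      (g := fun s => squareWave ((n : ℝ) * s / τ) • G s) (fun s hs => hfac n s (by
        rw [uIcc_of_le ht.1] at hs
        exact ⟨hs.1, hs.2.trans ht.2⟩))]
    have hb := norm_integral_smul_le_of_antiperiodic
      (σ := fun s => squareWave ((n : ℝ) * s / τ)) (G := G) (η := ε / (2 * τ)) (M := M)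
      (measurable_squareWave.comp ((measurable_id.const_mul _).div_const _))
      (fun s => abs_squareWave _) hδ0.le
      (fun s => by
        rw [← squareWave_add_half]
        congr 1
        rw [hδdef]
        field_simp)
      hGu.continuous hGM
      (fun s => by
        rw [← dist_eq_norm]
        exact (hdG (by rw [Real.dist_eq, sub_sub_cancel, abs_of_pos hδ0]; exact hδd)).le) ht.1
    have h1 : ε / (2 * τ) * t ≤ ε / 2 :=
      (mul_le_mul_of_nonneg_left ht.2 (by positivity)).trans (le_of_eq (by field_simp))
    linarith
  rw [Real.dist_eq, sub_zero, abs_of_nonneg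
    (Real.iSup_nonneg fun t => Real.iSup_nonneg fun _ => norm_nonneg _)]
  exact (Real.iSup_le (fun t => Real.iSup_le (fun ht => hbound t ht) (by positivity))
    (by positivity)).trans_lt (by linarith)
end
end

section
/- Let f : ℝ³ → ℝ³ be given by f(x₁,x₂,x₃) = (0, x₂x₃, −x₁x₂) and B : ℝ² → ℝ³ by B(u₁,u₂) = (u₁, u₂, u₂). Then for every γ ∈ ℝ³ there exist u ∈ ℝ² and ξ ∈ ℝ² such that γ = B u − f(B ξ). -/
noncomputable section

/-- The saturation hypothesis (Assumption 2) holds for the controlled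
Lorenz system: every `γ ∈ ℝ³` can be written as `γ = Bu − f(Bξ)` with
`f(x) = (0, x₂x₃, −x₁x₂)` and `B(u₁,u₂) = (u₁, u₂, u₂)`. -/
theorem saturation_lorenz
    (f : ℝ × ℝ × ℝ → ℝ × ℝ × ℝ) (B : ℝ × ℝ → ℝ × ℝ × ℝ)
    (hf : ∀ x : ℝ × ℝ × ℝ, f x = (0, x.2.1 * x.2.2, -(x.1 * x.2.1)))
    (hB : ∀ u : ℝ × ℝ, B u = (u.1, u.2, u.2)) :
    ∀ γ : ℝ × ℝ × ℝ, ∃ u ξ : ℝ × ℝ, γ = B u - f (B ξ) := by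
  rintro ⟨a, b, c⟩
  -- `B u - f (B ξ) = (u₁, u₂ - ξ₂ ^ 2, u₂ + ξ₁ * ξ₂)`; fixing `ξ₂ = 1` makes the system linear.
  refine ⟨(a, b + 1), (c - b - 1, 1), ?_⟩
  simp only [hf, hB, Prod.mk_sub_mk, Prod.mk.injEq]
  refine ⟨?_, ?_, ?_⟩ <;> ring
end
end

section
/- Let f : ℝ⁶ → ℝ⁶ be given by f(x₁,…,x₆) = (0, 0, 0, x₁x₂, x₁x₃, x₂x₃) and let B : ℝ³ → ℝ⁶ be given by B(u₁,u₂,u₃) = (u₁, u₂, u₃, 0, 0, 0). Then for every γ ∈ ℝ⁶ there exist ξ₀, ξ₁, ξ₂, ξ₃ in the range of B such that γ = ξ₀ − f(ξ₁) − f(ξ₂) − f(ξ₃). In particular, the one-step saturation condition E₁ = ℝ⁶ holds with E₀ = range B. -/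
noncomputable section

/-- For `f(x₁,…,x₆) = (0,0,0, x₁x₂, x₁x₃, x₂x₃)` on `ℝ⁶` and
`B(u₁,u₂,u₃) = (u₁,u₂,u₃,0,0,0)`, every `γ ∈ ℝ⁶` can be written as
`γ = ξ₀ − f(ξ₁) − f(ξ₂) − f(ξ₃)` with `ξ₀, ξ₁, ξ₂, ξ₃ ∈ range B`: the one-step saturation
condition `E₁ = ℝ⁶` holds with `E₀ = range B`. -/
theorem one_step_saturation_R6
    (f : (Fin 6 → ℝ) → (Fin 6 → ℝ)) (B : (Fin 3 → ℝ) → (Fin 6 → ℝ))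
    (hf : ∀ x : Fin 6 → ℝ,
      f x = ![0, 0, 0, x 0 * x 1, x 0 * x 2, x 1 * x 2])
    (hB : ∀ u : Fin 3 → ℝ, B u = ![u 0, u 1, u 2, 0, 0, 0]) :
    ∀ γ : Fin 6 → ℝ, ∃ ξ₀ ξ₁ ξ₂ ξ₃ : Fin 6 → ℝ,
      ξ₀ ∈ Set.range B ∧ ξ₁ ∈ Set.range B ∧ ξ₂ ∈ Set.range B ∧ ξ₃ ∈ Set.range B ∧
      γ = ξ₀ - f ξ₁ - f ξ₂ - f ξ₃ := by
  intro γ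
  -- `ξ₁, ξ₂, ξ₃` each vanish in one of the first three coordinates, so each `f ξᵢ` is
  -- supported on a single one of the last three coordinates; `ξ₀` supplies the first three.
  refine ⟨B ![γ 0, γ 1, γ 2], B ![1, -γ 3, 0], B ![1, 0, -γ 4], B ![0, 1, -γ 5],
    ⟨_, rfl⟩, ⟨_, rfl⟩, ⟨_, rfl⟩, ⟨_, rfl⟩, ?_⟩
  ext i
  fin_cases i <;> simp [hf, hB]
end
end

section
/- Let f : ℝ⁶ → ℝ⁶ be given by f(x₁,…,x₆) = (0, 0, 0, x₁x₂, x₁x₃, x₂x₃) and let B : ℝ³ → ℝ⁶ be given by B(u₁,u₂,u₃) = (u₁, u₂, u₃, 0, 0, 0). Then there exists γ ∈ ℝ⁶ (for instance γ = (0,0,0,a,0,b) with a ≠ 0 ≠ b) such that for all u ∈ ℝ³ and ξ ∈ ℝ³ one has γ ≠ B u − f(B ξ). In particular the single-pair saturation hypothesis (Assumption 1) fails for this system. -/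
noncomputable section

/-- For `f(x₁,…,x₆) = (0,0,0, x₁x₂, x₁x₃, x₂x₃)` on `ℝ⁶` and
`B(u₁,u₂,u₃) = (u₁,u₂,u₃,0,0,0)`, the single-pair saturation hypothesis (Assumption 2)
fails: there exists `γ ∈ ℝ⁶` which cannot be written as `γ = Bu − f(Bξ)`. -/
theorem single_pair_saturation_fails_R6
    (f : (Fin 6 → ℝ) → (Fin 6 → ℝ)) (B : (Fin 3 → ℝ) → (Fin 6 → ℝ))
    (hf : ∀ x : Fin 6 → ℝ,
      f x = ![0, 0, 0, x 0 * x 1, x 0 * x 2, x 1 * x 2])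
    (hB : ∀ u : Fin 3 → ℝ, B u = ![u 0, u 1, u 2, 0, 0, 0]) :
    ∃ γ : Fin 6 → ℝ, ∀ u ξ : Fin 3 → ℝ, γ ≠ B u - f (B ξ) := by
  -- The last three coordinates force `ξ₁ξ₂ = ξ₂ξ₃ = -1` and `ξ₁ξ₃ = 0`,
  -- so all `ξᵢ` are nonzero while `ξ₁` or `ξ₃` vanishes.
  refine ⟨![0, 0, 0, 1, 0, 1], fun u ξ h => ?_⟩
  rw [hf, hB, hB] at h
  have h3 : (1 : ℝ) = 0 - ξ 0 * ξ 1 := congrFun h 3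
  have h4 : (0 : ℝ) = 0 - ξ 0 * ξ 2 := congrFun h 4
  have h5 : (1 : ℝ) = 0 - ξ 1 * ξ 2 := congrFun h 5
  have h02 : ξ 0 * ξ 2 = 0 := by linarith
  rcases mul_eq_zero.mp h02 with h0 | h0
  · simp [h0] at h3
  · simp [h0] at h5
end
end

section
/- Let d ≥ 1 and let X, U be finite-dimensional real inner product spaces, A : X → X and B : U → X linear, f(x) = Γ(x,x) for a symmetric bilinear map Γ : X × X → X. Assume the saturation condition: there exist n ∈ ℕ and linear subspaces E₀, …, E_n of X with E₀ = range B, E_n = X, such that for each i ∈ {1,…,n} every γ ∈ E_i can be written γ = ξ₀ − Σ_{j=1}^{p} f(ξ_j) with ξ₀, …, ξ_p ∈ E_{i−1}. Consider for Z = ℝ^d the coupled system ẋ + A x + f(x) = B u, ż + Γ̃(z, x) + F(z) = 0 with Γ̃(a,b) = (a₁b₁, …, a_d b_d) componentwise and F : ℝ^d → ℝ^d locally Lipschitz. Let τ > 0, x₀ ∈ X, and let z_ref ∈ C^∞([0,τ];ℝ^d) satisfy z_ref(0) = z₀ and z_ref,l(t) ≠ 0 for every l ∈ {1,…,d} and t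 ∈ [0,τ]. Then for every ε > 0 there exists u ∈ C^∞([0,τ];U) such that the coupled system with (x(0), z(0)) = (x₀, z₀) has a solution (x, z) on [0,τ] satisfying sup_{t∈[0,τ]} ‖z(t) − z_ref(t)‖ < ε. -/
open MeasureTheory Set intervalIntegral
open scoped ENNReal

noncomputable section

/-!
The proof descends along the saturation chain `E n = ⊤, …, E 0 = range B`, working with
`X`-valued controls `v` in `ẋ + A x + f(x) = v`, where `f(x) = Γ(x, x)`.

**Stability under weakly small perturbations** (`exists_perturbed_solution`). A solution of
`ẏ = g(y) + L(y, a) + c` survives on the whole of `[0, τ]`, and moves little, when `a` and `c` are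
perturbed by bounded `w` and `h` that are small only in a weak sense: `w = W' + r` with `W` and `r`
uniformly small, and likewise for `h`. Integration by parts removes `W'` at the cost of small
terms, after which Gronwall's inequality applies. In particular `z` depends continuously on `x` in
this weak topology (`exists_z_of_weakly_close`).

**Full control** (`trackable_top`). Since no component of `z_ref` vanishes, `z_ref` solves the
`z`-equation driven by `x_ref = -(ż_ref + F(z_ref)) / z_ref`. When all of `X` is available for the
control, any smooth `x` starting at `x₀` is admissible; a smooth approximation of `x_ref` plus the
boundary layer `e^{-kt} (x₀ - p(0))` is weakly close to `x_ref`.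

**Descent** (`Trackable.of_saturated`). A smooth control with values in `E i` can be written
`v₀ - ∑ j, (φ_j² / 2) • f(η_j)` with `v₀`, `η_j` in `E (i - 1)` and smooth scalar `φ_j`
(`ConicExpansion.of_saturated`). A term `-(φ² / 2) • f(η)` is removed by adding the fast
oscillation `w = φ sin(k t) η` to `x`: the quadratic term `f(w)` averages to `(φ² / 2) • f(η)`, all
other effects of `w` average to zero, and the control only has to supply `ẇ ∈ E (i - 1)`
(`exists_oscillating_control`). The state `x` moves little in the weak sense, hence `z` moves
little uniformly.

At the end of the chain, the `range B`-valued control is lifted to `U` by a linear right inverse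
of `B` on its range.
-/

/-! ### Differential equations under weakly small perturbations -/

open scoped NNReal

/-- Global existence on `[0, τ]` for a bounded, globally Lipschitz field: by the bound `N`, the
solution cannot leave the ball of radius `N τ`, on which Picard–Lindelöf applies directly. -/
lemma exists_solution_of_bounded_lipschitz {E : Type*} [NormedAddCommGroup E] [NormedSpace ℝ E]
    [CompleteSpace E] {τ : ℝ} (hτ : 0 < τ) (Φ : ℝ → E → E) (y₀ : E) (N K : ℝ≥0)
    (hlip : ∀ t ∈ Icc (0 : ℝ) τ, LipschitzWith K (Φ t))
    (hcont : ∀ y, ContinuousOn (fun t => Φ t y) (Icc 0 τ))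
    (hbd : ∀ t ∈ Icc (0 : ℝ) τ, ∀ y, ‖Φ t y‖ ≤ N) :
    ∃ y : ℝ → E, y 0 = y₀ ∧
      ∀ t ∈ Icc (0 : ℝ) τ, HasDerivWithinAt y (Φ t (y t)) (Icc 0 τ) t := by
  have hPL : IsPicardLindelof Φ (tmin := 0) (tmax := τ) ⟨0, le_refl _, hτ.le⟩ y₀
      (N * τ.toNNReal) 0 N K :=
    { lipschitzOnWith := fun t ht => (hlip t ht).lipschitzOnWith
      continuousOn := fun y _ => hcont y
      norm_le := fun t ht y _ => hbd t ht y
      mul_max_le := by simp [hτ.le] }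
  exact hPL.exists_eq_forall_mem_Icc_hasDerivWithinAt₀

/-- A bounded, Lipschitz, differentiable map that is the identity on the ball of radius `R`.
Composing a locally Lipschitz field with it gives a bounded, globally Lipschitz field. -/
lemma exists_smooth_truncation (E : Type*) [NormedAddCommGroup E] [InnerProductSpace ℝ E]
    [FiniteDimensional ℝ E] {R : ℝ} (hR : 0 < R) :
    ∃ (κ : E → E) (C : ℝ≥0), Differentiable ℝ κ ∧ LipschitzWith C κ ∧
      (∀ y, ‖κ y‖ ≤ R + 1) ∧ ∀ y, ‖y‖ ≤ R → κ y = y := by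
  let χ : ContDiffBump (0 : E) := ⟨R, R + 1, hR, by linarith⟩
  have hsm : ContDiff ℝ 1 (fun y : E => χ y • y) := χ.contDiff.smul contDiff_id
  have hcs : HasCompactSupport (fun y : E => χ y • y) := χ.hasCompactSupport.smul_right
  obtain ⟨C, hC⟩ := ContDiff.lipschitzWith_of_hasCompactSupport hcs hsm one_ne_zero
  refine ⟨fun y => χ y • y, C, hsm.differentiable one_ne_zero, hC, fun y => ?_, fun y hy => ?_⟩
  · by_cases h : ‖y‖ ≤ R + 1
    · rw [norm_smul, Real.norm_of_nonneg χ.nonneg]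
      calc χ y * ‖y‖ ≤ 1 * ‖y‖ := by gcongr; exact χ.le_one
        _ ≤ R + 1 := by linarith
    · have : χ y = 0 := χ.zero_of_le_dist (by simpa using (not_le.mp h).le)
      simp [this]; linarith
  · have : χ y = 1 := χ.one_of_mem_closedBall (by simpa using hy)
    simp [this]

lemma gronwallBound_le_mul {a b K δ t τ : ℝ} (ha : 0 ≤ a) (hb : 0 ≤ b) (hK : 1 ≤ K) (hδ : 0 ≤ δ)
    (h0 : 0 ≤ t) (ht : t ≤ τ) :
    gronwallBound (a * δ) K (b * δ) t ≤ (a + b) * Real.exp (K * τ) * δ := by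
  rw [gronwallBound_of_K_ne_0 (by positivity)]
  have h1 : Real.exp (K * t) ≤ Real.exp (K * τ) := by gcongr
  have h2 : b * δ / K ≤ b * δ := div_le_self (by positivity) hK
  have h3 : 0 ≤ Real.exp (K * t) - 1 := by
    have := Real.add_one_le_exp (K * t)
    nlinarith
  have h4 : a * δ * Real.exp (K * t) ≤ a * δ * Real.exp (K * τ) := by gcongr
  have h5 : b * δ / K * (Real.exp (K * t) - 1) ≤ b * δ * Real.exp (K * τ) := by
    apply mul_le_mul h2 _ h3 (by positivity); linarith
  simp only []
  nlinarith

/-- Stability of `ẏ = g(y) + L(y, a) + c` under perturbations `w` of `a` and `h` of `c` which are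
bounded by a fixed `M` and equal to the derivative of a small function up to a small error:
`w = W' + r` and `h = H' + s` with `W, r, H, s` bounded by `δ`. The solution of the perturbed
equation with the same initial value then exists on `[0, τ]` and stays `ε`-close. -/
lemma exists_perturbed_solution {E : Type*} [NormedAddCommGroup E] [InnerProductSpace ℝ E]
    [FiniteDimensional ℝ E] {τ : ℝ} (hτ : 0 < τ) {g : E → E} (hg : LocallyLipschitz g)
    (L : E →L[ℝ] E →L[ℝ] E) {a c : ℝ → E} (ha : ContinuousOn a (Icc 0 τ))
    (hc : ContinuousOn c (Icc 0 τ)) {ybar : ℝ → E}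
    (hybar : ∀ t ∈ Icc (0 : ℝ) τ,
      HasDerivWithinAt ybar (g (ybar t) + L (ybar t) (a t) + c t) (Icc 0 τ) t)
    {ε : ℝ} (hε : 0 < ε) (M : ℝ) :
    ∃ δ > 0, ∀ w W r h H s : ℝ → E,
      ContinuousOn w (Icc 0 τ) → ContinuousOn h (Icc 0 τ) →
      (∀ t ∈ Icc (0 : ℝ) τ, ‖w t‖ ≤ M) → (∀ t ∈ Icc (0 : ℝ) τ, ‖h t‖ ≤ M) →
      (∀ t ∈ Icc (0 : ℝ) τ, HasDerivWithinAt W (w t - r t) (Icc 0 τ) t) →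
      (∀ t ∈ Icc (0 : ℝ) τ, HasDerivWithinAt H (h t - s t) (Icc 0 τ) t) →
      (∀ t ∈ Icc (0 : ℝ) τ, ‖W t‖ ≤ δ) → (∀ t ∈ Icc (0 : ℝ) τ, ‖r t‖ ≤ δ) →
      (∀ t ∈ Icc (0 : ℝ) τ, ‖H t‖ ≤ δ) → (∀ t ∈ Icc (0 : ℝ) τ, ‖s t‖ ≤ δ) →
      ∃ y : ℝ → E, y 0 = ybar 0 ∧
        (∀ t ∈ Icc (0 : ℝ) τ,
          HasDerivWithinAt y (g (y t) + L (y t) (a t + w t) + c t + h t) (Icc 0 τ) t) ∧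
        ∀ t ∈ Icc (0 : ℝ) τ, ‖y t - ybar t‖ ≤ ε := by
  have h0mem : (0 : ℝ) ∈ Icc (0 : ℝ) τ := ⟨le_refl _, hτ.le⟩
  have hcy : ContinuousOn ybar (Icc 0 τ) := fun t ht => (hybar t ht).continuousWithinAt
  obtain ⟨Ry, hRy⟩ := isCompact_Icc.exists_bound_of_continuousOn hcy
  obtain ⟨Ma, hMa⟩ := isCompact_Icc.exists_bound_of_continuousOn ha
  obtain ⟨Mc, hMc⟩ := isCompact_Icc.exists_bound_of_continuousOn hc
  have hRy0 : 0 ≤ Ry := (norm_nonneg _).trans (hRy 0 h0mem)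
  have hMa0 : 0 ≤ Ma := (norm_nonneg _).trans (hMa 0 h0mem)
  have hMc0 : 0 ≤ Mc := (norm_nonneg _).trans (hMc 0 h0mem)
  set R := Ry + ε with hRdef
  have hR : 0 < R := by positivity
  obtain ⟨κ, C, hκd, hκL, hκb, hκe⟩ := exists_smooth_truncation E hR
  have hκball : ∀ y, κ y ∈ Metric.closedBall (0 : E) (R + 1) := fun y => by simpa using hκb y
  obtain ⟨Kg, hKg⟩ := (hg.locallyLipschitzOn (s := Metric.closedBall (0 : E) (R + 1))
    ).exists_lipschitzOnWith_of_compact (isCompact_closedBall _ _)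
  obtain ⟨Bg, hBg⟩ := (isCompact_closedBall (0 : E) (R + 1)).exists_bound_of_continuousOn
    hg.continuous.continuousOn
  have hBg0 : 0 ≤ Bg := (norm_nonneg _).trans (hBg _ (hκball 0))
  have hgκ : ∀ y y', ‖g (κ y) - g (κ y')‖ ≤ Kg * C * ‖y - y'‖ := fun y y' => by
    have h1 := hKg.dist_le_mul _ (hκball y) _ (hκball y')
    have h2 := hκL.dist_le_mul y y'
    rw [dist_eq_norm, dist_eq_norm] at h1 h2
    calc _ ≤ Kg * ‖κ y - κ y'‖ := h1
      _ ≤ Kg * (C * ‖y - y'‖) := by gcongr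
      _ = _ := by ring
  have hLκ : ∀ y y' b, ‖L (κ y) b - L (κ y') b‖ ≤ ‖L‖ * C * ‖b‖ * ‖y - y'‖ := fun y y' b => by
    have h2 := hκL.dist_le_mul y y'
    rw [dist_eq_norm, dist_eq_norm] at h2
    have : L (κ y) b - L (κ y') b = L (κ y - κ y') b := by simp
    rw [this]
    calc _ ≤ ‖L‖ * ‖κ y - κ y'‖ * ‖b‖ := L.le_opNorm₂ _ _
      _ ≤ ‖L‖ * (C * ‖y - y'‖) * ‖b‖ := by gcongr
      _ = _ := by ring
  have hLb : ∀ y b, ‖L (κ y) b‖ ≤ ‖L‖ * (R + 1) * ‖b‖ := fun y b =>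
    (L.le_opNorm₂ _ _).trans (by gcongr; exact hκb y)
  set N : ℝ := Bg + ‖L‖ * (R + 1) * (Ma + |M|) + Mc + |M| with hN
  have hN0 : 0 ≤ N := by positivity
  set K : ℝ := Kg * C + ‖L‖ * C * Ma + 1 with hK
  have hK1 : 1 ≤ K := by
    have : 0 ≤ Kg * C + ‖L‖ * C * Ma := by positivity
    linarith
  -- With `S = L(κ(y), W) + H` and `D = y - ybar - S` below, `C1` and `C2` are such that
  -- `‖S‖ ≤ C1 δ` and `‖D'‖ ≤ K ‖D‖ + C2 δ`; Gronwall then gives `‖y - ybar‖ ≤ C3 δ`.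
  set C1 : ℝ := ‖L‖ * (R + 1) + 1 with hC1
  set C2 : ℝ := K * C1 + (‖L‖ * (R + 1) + 1 + ‖L‖ * (C * N)) with hC2
  have hC1p : 0 < C1 := by positivity
  have hC2p : 0 < C2 := by positivity
  set C3 : ℝ := (C1 + C2) * Real.exp (K * τ) + C1 with hC3
  have hC3p : 0 < C3 := by positivity
  refine ⟨ε / C3, by positivity, ?_⟩
  intro w W r h H s hw hh hwM hhM hW hH hWδ hrδ hHδ hsδ
  set δ := ε / C3 with hδ
  have hδ0 : 0 ≤ δ := by positivity
  -- The truncated field; its solution is shown to stay in the ball where `κ` is the identity.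
  set Φ : ℝ → E → E := fun t y => g (κ y) + L (κ y) (a t + w t) + c t + h t with hΦ
  have hΦb : ∀ t ∈ Icc (0 : ℝ) τ, ∀ y, ‖Φ t y‖ ≤ N := fun t ht y => by
    have h1 := hBg _ (hκball y)
    have h2 := hLb y (a t + w t)
    have h3 : ‖a t + w t‖ ≤ Ma + |M| :=
      (norm_add_le _ _).trans (add_le_add (hMa t ht) ((hwM t ht).trans (le_abs_self _)))
    have h4 : ‖L‖ * (R + 1) * ‖a t + w t‖ ≤ ‖L‖ * (R + 1) * (Ma + |M|) := by gcongr
    have h5 := hMc t ht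
    have h6 := (hhM t ht).trans (le_abs_self _)
    calc _ ≤ ‖g (κ y)‖ + ‖L (κ y) (a t + w t)‖ + ‖c t‖ + ‖h t‖ := norm_add₄_le
      _ ≤ _ := by linarith
  obtain ⟨y, hy0, hy⟩ := exists_solution_of_bounded_lipschitz hτ Φ (ybar 0) ⟨N, hN0⟩
    (Kg * C + ‖L‖₊ * C * (Ma + |M|).toNNReal) (fun t ht => by
      refine LipschitzWith.of_dist_le_mul fun y y' => ?_
      rw [dist_eq_norm, dist_eq_norm]
      have h3 : ‖a t + w t‖ ≤ Ma + |M| :=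
        (norm_add_le _ _).trans (add_le_add (hMa t ht) ((hwM t ht).trans (le_abs_self _)))
      have e : Φ t y - Φ t y' = (g (κ y) - g (κ y'))
          + (L (κ y) (a t + w t) - L (κ y') (a t + w t)) := by
        simp only [hΦ]; abel
      have h4 : ‖L‖ * C * ‖a t + w t‖ * ‖y - y'‖ ≤ ‖L‖ * C * (Ma + |M|) * ‖y - y'‖ := by
        gcongr
      rw [e]
      refine (norm_add_le _ _).trans ((add_le_add (hgκ y y') ((hLκ y y' _).trans h4)).trans
        (le_of_eq ?_))
      rw [NNReal.coe_add, NNReal.coe_mul, NNReal.coe_mul, NNReal.coe_mul, coe_nnnorm,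
        Real.coe_toNNReal _ (by positivity)]
      ring)
    (fun y => by
      have := (L (κ y)).continuous
      exact ((continuousOn_const.add (this.comp_continuousOn (ha.add hw))).add hc).add hh) hΦb
  set q : ℝ → E := fun t => κ (y t) with hq
  set q' : ℝ → E := fun t => fderiv ℝ κ (y t) (Φ t (y t)) with hq'
  have hqd : ∀ t ∈ Icc (0 : ℝ) τ, HasDerivWithinAt q (q' t) (Icc 0 τ) t := fun t ht =>
    (hκd (y t)).hasFDerivAt.comp_hasDerivWithinAt t (hy t ht)
  have hq'b : ∀ t ∈ Icc (0 : ℝ) τ, ‖q' t‖ ≤ C * N := fun t ht =>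
    (ContinuousLinearMap.le_opNorm _ _).trans
      (mul_le_mul (norm_fderiv_le_of_lipschitz ℝ hκL) (hΦb t ht _) (norm_nonneg _) C.2)
  -- The integration-by-parts corrector: `S'` contains the large part `L(q, w) + h` of `(y - ybar)'`,
  -- and its remaining terms involve only `W`, `r` and `s`, which are small.
  set S : ℝ → E := fun t => L (q t) (W t) + H t with hS
  have hSd : ∀ t ∈ Icc (0 : ℝ) τ, HasDerivWithinAt S
      (L (q' t) (W t) + L (q t) (w t - r t) + (h t - s t)) (Icc 0 τ) t := fun t ht =>
    (((L.hasFDerivAt.comp_hasDerivWithinAt t (hqd t ht)).clm_apply (hW t ht))).add (hH t ht)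
  have hSb : ∀ t ∈ Icc (0 : ℝ) τ, ‖S t‖ ≤ C1 * δ := fun t ht => by
    have h1 := hLb (y t) (W t)
    have h2 : ‖L‖ * (R + 1) * ‖W t‖ ≤ ‖L‖ * (R + 1) * δ := by gcongr; exact hWδ t ht
    have h3 := hHδ t ht
    have h4 := norm_add_le (L (q t) (W t)) (H t)
    simp only [hS, hC1]
    simp only [hq] at h4 ⊢
    linarith
  set D : ℝ → E := fun t => y t - ybar t - S t with hD
  set D' : ℝ → E := fun t => (g (κ (y t)) - g (κ (ybar t)))
    + (L (κ (y t)) (a t) - L (κ (ybar t)) (a t)) + L (q t) (r t) + s t - L (q' t) (W t) with hD'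
  have hκybar : ∀ t ∈ Icc (0 : ℝ) τ, κ (ybar t) = ybar t := fun t ht =>
    hκe _ ((hRy t ht).trans (by linarith))
  have hDd : ∀ t ∈ Icc (0 : ℝ) τ, HasDerivWithinAt D (D' t) (Icc 0 τ) t := fun t ht => by
    refine (((hy t ht).sub (hybar t ht)).sub (hSd t ht)).congr_deriv ?_
    simp only [hD', hΦ, hκybar t ht, hq, map_add, map_sub]
    abel
  have hDb : ∀ t ∈ Icc (0 : ℝ) τ, ‖D' t‖ ≤ K * ‖D t‖ + C2 * δ := fun t ht => by
    have h1 := hgκ (y t) (ybar t)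
    have h2 := hLκ (y t) (ybar t) (a t)
    have h2' : ‖L‖ * C * ‖a t‖ * ‖y t - ybar t‖ ≤ ‖L‖ * C * Ma * ‖y t - ybar t‖ := by
      gcongr; exact hMa t ht
    have h3 := hLb (y t) (r t)
    have h3' : ‖L‖ * (R + 1) * ‖r t‖ ≤ ‖L‖ * (R + 1) * δ := by gcongr; exact hrδ t ht
    have h4 := hsδ t ht
    have h5 : ‖L (q' t) (W t)‖ ≤ ‖L‖ * (C * N) * δ :=
      (L.le_opNorm₂ _ _).trans (by gcongr; exacts [hq'b t ht, hWδ t ht])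
    have h6 : ‖y t - ybar t‖ ≤ ‖D t‖ + C1 * δ := by
      have : y t - ybar t = D t + S t := by simp [hD]
      rw [this]
      exact (norm_add_le _ _).trans (add_le_add le_rfl (hSb t ht))
    have h7 : K * ‖y t - ybar t‖ ≤ K * (‖D t‖ + C1 * δ) := by gcongr
    have h8 : ‖D' t‖ ≤ ‖g (κ (y t)) - g (κ (ybar t))‖ + ‖L (κ (y t)) (a t) - L (κ (ybar t)) (a t)‖
        + ‖L (q t) (r t)‖ + ‖s t‖ + ‖L (q' t) (W t)‖ :=
      (norm_sub_le _ _).trans (add_le_add norm_add₄_le le_rfl)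
    have h9 := norm_nonneg (y t - ybar t)
    have hK' : K * ‖y t - ybar t‖ = Kg * C * ‖y t - ybar t‖ + ‖L‖ * C * Ma * ‖y t - ybar t‖
      + ‖y t - ybar t‖ := by rw [hK]; ring
    have hC2' : C2 * δ = K * (C1 * δ) + (‖L‖ * (R + 1) * δ + δ + ‖L‖ * (C * N) * δ) := by
      rw [hC2]; ring
    simp only [hq] at h8
    linarith
  have hDcont : ContinuousOn D (Icc 0 τ) := fun t ht => (hDd t ht).continuousWithinAt
  have hD0 : ‖D 0‖ ≤ C1 * δ := by
    have := hSb 0 h0mem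
    simpa [hD, hy0] using this
  have hDg := norm_le_gronwallBound_of_norm_deriv_right_le hDcont
    (fun t ht => (hDd t (Ico_subset_Icc_self ht)).mono_of_mem_nhdsWithin
      (Icc_mem_nhdsGE_of_mem ht)) hD0 (fun t ht => hDb t (Ico_subset_Icc_self ht))
  have hclose : ∀ t ∈ Icc (0 : ℝ) τ, ‖y t - ybar t‖ ≤ ε := fun t ht => by
    have h1 := hDg t ht
    rw [sub_zero] at h1
    have h2 := gronwallBound_le_mul hC1p.le hC2p.le hK1 hδ0 ht.1 ht.2
    have h3 : y t - ybar t = D t + S t := by simp [hD]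
    have h4 := norm_add_le (D t) (S t)
    have h5 := hSb t ht
    have h6 : C3 * δ = ε := by rw [hδ]; field_simp
    have h7 : C3 * δ = (C1 + C2) * Real.exp (K * τ) * δ + C1 * δ := by rw [hC3]; ring
    rw [h3]; linarith
  refine ⟨y, hy0, fun t ht => ?_, hclose⟩
  have hκy : κ (y t) = y t := hκe _ (by
    have h1 : ‖y t‖ ≤ ‖y t - ybar t‖ + ‖ybar t‖ := by
      simpa using norm_add_le (y t - ybar t) (ybar t)
    have h2 := hRy t ht
    have h3 := hclose t ht
    linarith)
  have := hy t ht
  simp only [hΦ, hκy] at this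
  exact this

/-! ### The coupled system -/

/-- The componentwise product `Γ̃(a, b) = (a₁ b₁, …, a_d b_d)` on `ℝ^d` as a continuous bilinear
map. -/
def hadamard (d : ℕ) : EuclideanSpace ℝ (Fin d) →L[ℝ] EuclideanSpace ℝ (Fin d) →L[ℝ]
    EuclideanSpace ℝ (Fin d) :=
  (LinearMap.mk₂ ℝ (fun a b : EuclideanSpace ℝ (Fin d) => WithLp.toLp 2 (fun l => a l * b l))
    (fun a a' b => by ext l; simp [add_mul])
    (fun k a b => by ext l; simp [mul_assoc])
    (fun a b b' => by ext l; simp [mul_add])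
    (fun k a b => by ext l; simp [mul_left_comm])).toContinuousBilinearMap

lemma hadamard_apply {d : ℕ} (a b : EuclideanSpace ℝ (Fin d)) :
    hadamard d a b = WithLp.toLp 2 (fun l => a l * b l) := rfl

/-- `(x, z)` solves, on `[0, τ]` and from the initial value `(x₀, z₀)`, the system
`ẋ + A x + Γ(x, x) = v`, `ż + Γ̃(z, x) + F(z) = 0`, with the control `v` taking values in the state
space. Derivatives are one-sided at the endpoints. -/
structure IsTrajectory {d : ℕ}
    (A : EuclideanSpace ℝ (Fin d) →L[ℝ] EuclideanSpace ℝ (Fin d))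
    (Γ : EuclideanSpace ℝ (Fin d) →L[ℝ] EuclideanSpace ℝ (Fin d) →L[ℝ] EuclideanSpace ℝ (Fin d))
    (F : EuclideanSpace ℝ (Fin d) → EuclideanSpace ℝ (Fin d)) (τ : ℝ)
    (x₀ z₀ : EuclideanSpace ℝ (Fin d)) (v x z : ℝ → EuclideanSpace ℝ (Fin d)) : Prop where
  x_zero : x 0 = x₀
  z_zero : z 0 = z₀
  x_deriv : ∀ t ∈ Icc (0 : ℝ) τ,
    HasDerivWithinAt x (v t - A (x t) - Γ (x t) (x t)) (Icc 0 τ) t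
  z_deriv : ∀ t ∈ Icc (0 : ℝ) τ,
    HasDerivWithinAt z (-(hadamard d (z t) (x t) + F (z t))) (Icc 0 τ) t

section
variable {d : ℕ} {A : EuclideanSpace ℝ (Fin d) →L[ℝ] EuclideanSpace ℝ (Fin d)}
  {Γ : EuclideanSpace ℝ (Fin d) →L[ℝ] EuclideanSpace ℝ (Fin d) →L[ℝ] EuclideanSpace ℝ (Fin d)}
  {F : EuclideanSpace ℝ (Fin d) → EuclideanSpace ℝ (Fin d)} {τ : ℝ}
  {x₀ z₀ : EuclideanSpace ℝ (Fin d)}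

/-- The solution `z` of `ż + Γ̃(z, x) + F(z) = 0` depends continuously on `x` in a weak sense: if
`x' - x` is bounded by `M` and equals `W' + r` with `W` and `r` small, then the solution driven by
`x'` exists on `[0, τ]` and is close to `z`. -/
lemma exists_z_of_weakly_close (hF : LocallyLipschitz F) (hτ : 0 < τ)
    {x z : ℝ → EuclideanSpace ℝ (Fin d)} (hx : ContinuousOn x (Icc 0 τ))
    (hz : ∀ t ∈ Icc (0 : ℝ) τ,
      HasDerivWithinAt z (-(hadamard d (z t) (x t) + F (z t))) (Icc 0 τ) t)
    {ε : ℝ} (hε : 0 < ε) {M : ℝ} (hM : 0 ≤ M) :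
    ∃ δ > 0, ∀ x' W r : ℝ → EuclideanSpace ℝ (Fin d), ContinuousOn x' (Icc 0 τ) →
      (∀ t ∈ Icc (0 : ℝ) τ, ‖x' t - x t‖ ≤ M) →
      (∀ t ∈ Icc (0 : ℝ) τ, HasDerivWithinAt W (x' t - x t - r t) (Icc 0 τ) t) →
      (∀ t ∈ Icc (0 : ℝ) τ, ‖W t‖ ≤ δ) → (∀ t ∈ Icc (0 : ℝ) τ, ‖r t‖ ≤ δ) →
      ∃ z' : ℝ → EuclideanSpace ℝ (Fin d), z' 0 = z 0 ∧
        (∀ t ∈ Icc (0 : ℝ) τ,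
          HasDerivWithinAt z' (-(hadamard d (z' t) (x' t) + F (z' t))) (Icc 0 τ) t) ∧
        ∀ t ∈ Icc (0 : ℝ) τ, ‖z' t - z t‖ ≤ ε := by
  obtain ⟨δ, hδ, H⟩ := exists_perturbed_solution hτ (g := fun z => -F z) hF.neg
    (-hadamard d) (a := x) (c := fun _ => 0) hx continuousOn_const (ybar := z)
    (fun t ht => (hz t ht).congr_deriv (by simp)) hε M
  refine ⟨δ, hδ, fun x' W r hx' hb hW hWδ hrδ => ?_⟩
  obtain ⟨z', h0, h1, h2⟩ := H (fun t => x' t - x t) W r (fun _ => 0) (fun _ => 0) (fun _ => 0)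
    (hx'.sub hx) continuousOn_const hb (by simpa using fun _ _ _ => hM) hW
    (fun t _ => by simpa using hasDerivWithinAt_const t (Icc 0 τ) (0 : EuclideanSpace ℝ (Fin d)))
    hWδ hrδ
    (fun _ _ => by simpa using hδ.le) (fun _ _ => by simpa using hδ.le)
  exact ⟨z', h0, fun t ht => (h1 t ht).congr_deriv (by simp), h2⟩

lemma IsTrajectory.continuousOn_x {v x z : ℝ → EuclideanSpace ℝ (Fin d)}
    (h : IsTrajectory A Γ F τ x₀ z₀ v x z) : ContinuousOn x (Icc 0 τ) :=
  fun t ht => (h.x_deriv t ht).continuousWithinAt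

lemma IsTrajectory.continuousOn_z {v x z : ℝ → EuclideanSpace ℝ (Fin d)}
    (h : IsTrajectory A Γ F τ x₀ z₀ v x z) : ContinuousOn z (Icc 0 τ) :=
  fun t ht => (h.z_deriv t ht).continuousWithinAt

/-! ### Replacing a quadratic control term by a fast oscillation -/

/-- The control term `-(φ² / 2) Γ(η, η)` can be traded for a smooth multiple of `η` at an
arbitrarily small cost in `z`. For `w = φ sin(k t) η` with `k` large, `x' = y + w`, where `y` solves
the `x`-equation with control `v` and with `-A w - 2 Γ(y, w) - Γ(w, w)` on the right-hand side.
The first two terms are weakly small and `Γ(w, w) = (φ² / 2) (1 - cos(2 k t)) Γ(η, η)`, so that `y`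
is close to `x`, and `x'` solves the `x`-equation with control `v + ẇ`. -/
lemma exists_oscillating_control (hΓ : ∀ a b, Γ a b = Γ b a) (hF : LocallyLipschitz F) (hτ : 0 < τ)
    {v x z : ℝ → EuclideanSpace ℝ (Fin d)} (hv : Continuous v) {φ : ℝ → ℝ}
    (hφ : ContDiff ℝ (⊤ : ℕ∞) φ) (η : EuclideanSpace ℝ (Fin d))
    (h : IsTrajectory A Γ F τ x₀ z₀ (fun t => v t - (φ t ^ 2 / 2) • Γ η η) x z)
    {ε : ℝ} (hε : 0 < ε) :
    ∃ ψ : ℝ → ℝ, ContDiff ℝ (⊤ : ℕ∞) ψ ∧ ∃ x' z',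
      IsTrajectory A Γ F τ x₀ z₀ (fun t => v t + ψ t • η) x' z' ∧
      ∀ t ∈ Icc (0 : ℝ) τ, ‖z' t - z t‖ ≤ ε := by
  have h0mem : (0 : ℝ) ∈ Icc (0 : ℝ) τ := ⟨le_refl _, hτ.le⟩
  have hφ' : Continuous (deriv φ) := hφ.continuous_deriv (by simp)
  have hφd : ∀ t, HasDerivAt φ (deriv φ t) t := fun t =>
    (hφ.differentiable (by simp) t).hasDerivAt
  obtain ⟨m₁, hm₁⟩ := isCompact_Icc.exists_bound_of_continuousOn
    (s := Icc (0 : ℝ) τ) hφ.continuous.continuousOn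
  obtain ⟨m₂, hm₂⟩ := isCompact_Icc.exists_bound_of_continuousOn
    (s := Icc (0 : ℝ) τ) hφ'.continuousOn
  set m := max m₁ m₂ with hm
  have hmφ : ∀ t ∈ Icc (0 : ℝ) τ, |φ t| ≤ m := fun t ht => (hm₁ t ht).trans (le_max_left _ _)
  have hmφ' : ∀ t ∈ Icc (0 : ℝ) τ, |deriv φ t| ≤ m := fun t ht =>
    (hm₂ t ht).trans (le_max_right _ _)
  have hm0 : 0 ≤ m := (abs_nonneg _).trans (hmφ 0 h0mem)
  -- `Q` dominates the sizes of all the oscillating terms, and `Q / k` those of their antiderivatives.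
  set Q := m * ‖η‖ + ‖A‖ * (m * ‖η‖) + m ^ 2 * ‖Γ η η‖ with hQ
  have hQ0 : 0 ≤ Q := by positivity
  have hmQ : m * ‖η‖ ≤ Q := by
    have : 0 ≤ ‖A‖ * (m * ‖η‖) + m ^ 2 * ‖Γ η η‖ := by positivity
    linarith
  obtain ⟨δz, hδz, Hz⟩ := exists_z_of_weakly_close hF hτ h.continuousOn_x h.z_deriv hε
    (M := Q + 1) (by positivity)
  have hg : LocallyLipschitz (fun x => -A x - Γ x x) := by
    refine ContDiff.locallyLipschitz (𝕂 := ℝ) ?_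
    fun_prop
  obtain ⟨δx, hδx, Hx⟩ := exists_perturbed_solution hτ hg (-(2 : ℝ) • Γ) (a := fun _ => 0)
    (c := fun t => v t - (φ t ^ 2 / 2) • Γ η η) continuousOn_const
    (by have := hφ.continuous; fun_prop) (ybar := x)
    (fun t ht => (h.x_deriv t ht).congr_deriv (by simp; abel))
    (ε := min 1 (δz / 2)) (by positivity) Q
  obtain ⟨k, hk1, hk⟩ : ∃ k : ℝ, 1 ≤ k ∧ Q / k ≤ min δx (δz / 2) := by
    refine ⟨max 1 (Q / min δx (δz / 2)), le_max_left _ _, ?_⟩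
    rw [div_le_iff₀ (by positivity), mul_comm, ← div_le_iff₀ (by positivity)]
    exact le_max_right _ _
  have hk0 : 0 < k := by positivity
  have hsin : ∀ t, HasDerivAt (fun t => Real.sin (k * t)) (k * Real.cos (k * t)) t := fun t => by
    simpa [mul_comm] using ((hasDerivAt_id t).const_mul k).sin
  have hcos : ∀ t, HasDerivAt (fun t => Real.cos (k * t)) (-(k * Real.sin (k * t))) t := fun t => by
    simpa [mul_comm] using ((hasDerivAt_id t).const_mul k).cos
  have hsin2 : ∀ t, HasDerivAt (fun t => Real.sin (2 * k * t)) (2 * k * Real.cos (2 * k * t)) t :=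
    fun t => by simpa [mul_comm] using ((hasDerivAt_id t).const_mul (2 * k)).sin
  set ω : ℝ → ℝ := fun t => φ t * Real.sin (k * t) with hω
  have hωsm : ContDiff ℝ (⊤ : ℕ∞) ω := by
    exact hφ.mul (Real.contDiff_sin.comp (contDiff_const.mul contDiff_id))
  have hωd : ∀ t, HasDerivAt ω (deriv ω t) t := fun t =>
    (hωsm.differentiable (by simp) t).hasDerivAt
  -- `ω = Ω' + ρ`: one integration by parts gains a factor `1 / k`.
  set Ω : ℝ → ℝ := fun t => -(φ t * Real.cos (k * t) / k) with hΩ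
  set ρ : ℝ → ℝ := fun t => deriv φ t * Real.cos (k * t) / k with hρ
  have hΩd : ∀ t, HasDerivAt Ω (ω t - ρ t) t := fun t => by
    refine (((hφd t).mul (hcos t)).div_const k).neg.congr_deriv ?_
    simp only [hω, hρ]; field_simp; ring
  -- `ω² = φ² / 2 - θ`, by the double-angle formula, and `θ = Θ' + σ` with `Θ` and `σ` of order
  -- `1 / k`.
  set θ : ℝ → ℝ := fun t => φ t ^ 2 / 2 * Real.cos (2 * k * t) with hθ
  set Θ : ℝ → ℝ := fun t => φ t ^ 2 * Real.sin (2 * k * t) / (4 * k) with hΘ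
  set σ : ℝ → ℝ := fun t => -(φ t * deriv φ t * Real.sin (2 * k * t) / (2 * k)) with hσ
  have hΘd : ∀ t, HasDerivAt Θ (θ t - σ t) t := fun t => by
    refine ((((hφd t).pow 2).mul (hsin2 t)).div_const (4 * k)).congr_deriv ?_
    simp only [hθ, hσ]; field_simp; simp; ring
  have hωb : ∀ t ∈ Icc (0 : ℝ) τ, |ω t| ≤ m := fun t ht => by
    simp only [hω, abs_mul]
    simpa using mul_le_mul (hmφ t ht) (Real.abs_sin_le_one (k * t)) (abs_nonneg _) hm0
  have hΩb : ∀ t ∈ Icc (0 : ℝ) τ, |Ω t| ≤ m / k := fun t ht => by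
    simp only [hΩ, abs_neg, abs_div, abs_mul, abs_of_pos hk0]
    gcongr
    simpa using mul_le_mul (hmφ t ht) (Real.abs_cos_le_one (k * t)) (abs_nonneg _) hm0
  have hρb : ∀ t ∈ Icc (0 : ℝ) τ, |ρ t| ≤ m / k := fun t ht => by
    simp only [hρ, abs_div, abs_mul, abs_of_pos hk0]
    gcongr
    simpa using mul_le_mul (hmφ' t ht) (Real.abs_cos_le_one (k * t)) (abs_nonneg _) hm0
  have hφ2 : ∀ t ∈ Icc (0 : ℝ) τ, |φ t| ^ 2 ≤ m ^ 2 := fun t ht => by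
    gcongr; exact hmφ t ht
  have hθb : ∀ t ∈ Icc (0 : ℝ) τ, |θ t| ≤ m ^ 2 := fun t ht => by
    simp only [hθ, abs_div, abs_mul, abs_pow, abs_two]
    have h1 := hφ2 t ht
    have h2 := mul_le_mul h1 (Real.abs_cos_le_one (2 * k * t)) (abs_nonneg _) (by positivity)
    have h3 : 0 ≤ |φ t| ^ 2 * |Real.cos (2 * k * t)| := by positivity
    linarith
  have hΘb : ∀ t ∈ Icc (0 : ℝ) τ, |Θ t| ≤ m ^ 2 / k := fun t ht => by
    have h2 := mul_le_mul (hφ2 t ht) (Real.abs_sin_le_one (2 * k * t)) (abs_nonneg _)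
      (by positivity)
    have h4 : |(4 : ℝ)| = 4 := by norm_num
    simp only [hΘ, abs_div, abs_mul, abs_pow, h4, abs_of_pos hk0]
    apply div_le_div₀ (by positivity) (by linarith) hk0 (by linarith)
  have hσb : ∀ t ∈ Icc (0 : ℝ) τ, |σ t| ≤ m ^ 2 / k := fun t ht => by
    have h1 := mul_le_mul (hmφ t ht) (hmφ' t ht) (abs_nonneg _) hm0
    have h2 := mul_le_mul h1 (Real.abs_sin_le_one (2 * k * t)) (abs_nonneg _)
      (by positivity)
    simp only [hσ, abs_neg, abs_div, abs_mul, abs_two, abs_of_pos hk0]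
    apply div_le_div₀ (by positivity) (by nlinarith) hk0 (by linarith)
  have hsmall : ∀ p : ℝ, |p| ≤ m / k → ‖p • η‖ ≤ Q / k := fun p hp => by
    rw [norm_smul, Real.norm_eq_abs]
    calc |p| * ‖η‖ ≤ m / k * ‖η‖ := by gcongr
      _ = m * ‖η‖ / k := by ring
      _ ≤ Q / k := by gcongr
  have hcomb : ∀ (p q c : ℝ), 0 < c → |p| ≤ m / c → |q| ≤ m ^ 2 / c →
      ‖-A (p • η) + q • Γ η η‖ ≤ Q / c := fun p q c hc hp hq => by
    calc _ ≤ ‖A (p • η)‖ + ‖q • Γ η η‖ := by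
          simpa using norm_add_le (-A (p • η)) (q • Γ η η)
      _ ≤ ‖A‖ * (|p| * ‖η‖) + |q| * ‖Γ η η‖ := by
          rw [norm_smul q, Real.norm_eq_abs]
          gcongr
          simpa [norm_smul] using A.le_opNorm (p • η)
      _ ≤ ‖A‖ * (m / c * ‖η‖) + m ^ 2 / c * ‖Γ η η‖ := by gcongr
      _ = (‖A‖ * (m * ‖η‖) + m ^ 2 * ‖Γ η η‖) / c := by ring
      _ ≤ Q / c := by
          gcongr
          have : 0 ≤ m * ‖η‖ := by positivity
          linarith
  have hWd : ∀ t ∈ Icc (0 : ℝ) τ,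
      HasDerivWithinAt (fun t => Ω t • η) (ω t • η - ρ t • η) (Icc 0 τ) t := fun t _ =>
    (((hΩd t).smul_const η).congr_deriv (sub_smul _ _ _)).hasDerivWithinAt
  have hωM : ∀ t ∈ Icc (0 : ℝ) τ, ‖ω t • η‖ ≤ Q := fun t ht => by
    rw [norm_smul, Real.norm_eq_abs]
    exact (mul_le_mul_of_nonneg_right (hωb t ht) (norm_nonneg _)).trans hmQ
  have hkx : Q / k ≤ δx := hk.trans (min_le_left _ _)
  have hkz : Q / k ≤ δz / 2 := hk.trans (min_le_right _ _)
  obtain ⟨y, hy0, hyd, hyb⟩ := Hx (fun t => ω t • η) (fun t => Ω t • η) (fun t => ρ t • η)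
    (fun t => -A (ω t • η) + θ t • Γ η η) (fun t => -A (Ω t • η) + Θ t • Γ η η)
    (fun t => -A (ρ t • η) + σ t • Γ η η)
    (by have := hωsm.continuous; fun_prop)
    (by have := hωsm.continuous; have := hφ.continuous; fun_prop)
    hωM
    (fun t ht => by
      simpa using hcomb (ω t) (θ t) 1 one_pos (by simpa using hωb t ht) (by simpa using hθb t ht))
    hWd
    (fun t ht => by
      refine ((A.hasFDerivAt.comp_hasDerivWithinAt t (hWd t ht)).neg.add
        ((hΘd t).smul_const (Γ η η)).hasDerivWithinAt).congr_deriv ?_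
      simp only [map_sub, sub_smul]; abel)
    (fun t ht => (hsmall _ (hΩb t ht)).trans hkx)
    (fun t ht => (hsmall _ (hρb t ht)).trans hkx)
    (fun t ht => (hcomb _ _ k hk0 (hΩb t ht) (hΘb t ht)).trans hkx)
    (fun t ht => (hcomb _ _ k hk0 (hρb t ht) (hσb t ht)).trans hkx)
  have hxd : ∀ t ∈ Icc (0 : ℝ) τ, HasDerivWithinAt (fun t => y t + ω t • η)
      ((v t + deriv ω t • η) - A (y t + ω t • η) - Γ (y t + ω t • η) (y t + ω t • η))
      (Icc 0 τ) t := fun t ht => by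
    refine ((hyd t ht).add ((hωd t).smul_const η).hasDerivWithinAt).congr_deriv ?_
    have hs : ω t * ω t = φ t ^ 2 / 2 - θ t := by
      have := Real.cos_sq_add_sin_sq (k * t)
      simp only [hω, hθ, mul_assoc, Real.cos_two_mul]
      linear_combination (φ t ^ 2) * this
    have e1 : Γ (ω t • η) (ω t • η) = (φ t ^ 2 / 2) • Γ η η - θ t • Γ η η := by
      rw [← sub_smul, ← hs]; simp [smul_smul]
    have e2 : Γ (y t + ω t • η) (y t + ω t • η)
        = Γ (y t) (y t) + (2 : ℝ) • Γ (y t) (ω t • η) + Γ (ω t • η) (ω t • η) := by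
      simp only [map_add, add_apply, hΓ (ω t • η) (y t), two_smul]
      abel
    have e3 : (-(2 : ℝ) • Γ) (y t) (0 + ω t • η) = -((2 : ℝ) • Γ (y t) (ω t • η)) := by
      simp [smul_comm (ω t) (2 : ℝ)]
    rw [e3, e2, e1, map_add]
    abel
  obtain ⟨z', hz0, hzd, hzb⟩ := Hz (fun t => y t + ω t • η) (fun t => Ω t • η)
    (fun t => ρ t • η + (y t - x t)) (fun t ht => (hxd t ht).continuousWithinAt)
    (fun t ht => by
      have h1 := hωM t ht
      have h2 := (hyb t ht).trans (min_le_left _ _)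
      have h3 := norm_add_le (y t - x t) (ω t • η)
      have h4 : y t + ω t • η - x t = (y t - x t) + ω t • η := by abel
      rw [h4]; linarith)
    (fun t ht => (hWd t ht).congr_deriv (by abel))
    (fun t ht => ((hsmall _ (hΩb t ht)).trans hkz).trans (by linarith))
    (fun t ht => by
      have h1 := (hsmall _ (hρb t ht)).trans hkz
      have h2 := (hyb t ht).trans (min_le_right _ _)
      have h3 := norm_add_le (ρ t • η) (y t - x t)
      linarith)
  refine ⟨deriv ω, (contDiff_infty_iff_deriv.1 hωsm).2, _, z',
    ⟨?_, hz0.trans h.z_zero, hxd, hzd⟩, hzb⟩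
  simp [hy0, h.x_zero, hω]

/-! ### Descent along the saturation chain -/

/-- The curves of the form `v₀ - ∑ j, (φ_j² / 2) • Γ(η_j, η_j)`, with `v₀` a smooth `V`-valued curve,
`φ_j` smooth real functions and `η_j ∈ V` constant. The quadratic terms are attached one at a time,
since they are also removed one at a time in `exists_control_of_conicExpansion`. -/
inductive ConicExpansion
    (Γ : EuclideanSpace ℝ (Fin d) →L[ℝ] EuclideanSpace ℝ (Fin d) →L[ℝ] EuclideanSpace ℝ (Fin d))
    (V : Submodule ℝ (EuclideanSpace ℝ (Fin d))) : (ℝ → EuclideanSpace ℝ (Fin d)) → Prop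
  | base (v : ℝ → EuclideanSpace ℝ (Fin d)) (hv : ContDiff ℝ (⊤ : ℕ∞) v) (hV : ∀ t, v t ∈ V) :
      ConicExpansion Γ V v
  | step (v : ℝ → EuclideanSpace ℝ (Fin d)) (φ : ℝ → ℝ) (η : EuclideanSpace ℝ (Fin d))
      (hv : ConicExpansion Γ V v) (hφ : ContDiff ℝ (⊤ : ℕ∞) φ) (hη : η ∈ V) :
      ConicExpansion Γ V (fun t => v t - (φ t ^ 2 / 2) • Γ η η)

namespace ConicExpansion

variable {V : Submodule ℝ (EuclideanSpace ℝ (Fin d))}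

lemma contDiff {v : ℝ → EuclideanSpace ℝ (Fin d)} (h : ConicExpansion Γ V v) :
    ContDiff ℝ (⊤ : ℕ∞) v := by
  induction h with
  | base v hv hV => exact hv
  | step v φ η hv hφ hη ih => exact ih.sub (((hφ.pow 2).div_const 2).smul contDiff_const)

lemma add {v w : ℝ → EuclideanSpace ℝ (Fin d)} (hv : ConicExpansion Γ V v)
    (hw : ConicExpansion Γ V w) : ConicExpansion Γ V (fun t => v t + w t) := by
  induction hw with
  | base w hw hwV =>
    induction hv with
    | base v hv hvV => exact base _ (hv.add hw) fun t => V.add_mem (hvV t) (hwV t)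
    | step v φ η _ hφ hη ih =>
      convert step _ φ η ih hφ hη using 2
      exact sub_add_eq_add_sub _ _ _
  | step w φ η _ hφ hη ih =>
    convert step _ φ η ih hφ hη using 2
    exact (add_sub_assoc _ _ _).symm

lemma sum {ι : Type*} (s : Finset ι) (v : ι → ℝ → EuclideanSpace ℝ (Fin d))
    (h : ∀ i ∈ s, ConicExpansion Γ V (v i)) : ConicExpansion Γ V (fun t => ∑ i ∈ s, v i t) := by
  classical
  induction s using Finset.induction_on with
  | empty => simpa using base (Γ := Γ) (V := V) (fun _ => 0) contDiff_const fun _ => V.zero_mem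
  | insert a s ha ih =>
    simp only [Finset.sum_insert ha]
    exact (h a (Finset.mem_insert_self _ _)).add
      (ih fun i hi => h i (Finset.mem_insert_of_mem hi))

/-- The coefficient `φ² / 2` is nonnegative by construction, so it can be distributed over the
representation of `γ` without changing the sign of the quadratic terms. -/
lemma sq_smul {γ : EuclideanSpace ℝ (Fin d)}
    (hγ : ∃ (p : ℕ) (ξ : ℕ → EuclideanSpace ℝ (Fin d)), (∀ j ≤ p, ξ j ∈ V) ∧
      γ = ξ 0 - ∑ j ∈ Finset.Icc 1 p, Γ (ξ j) (ξ j))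
    {φ : ℝ → ℝ} (hφ : ContDiff ℝ (⊤ : ℕ∞) φ) :
    ConicExpansion Γ V (fun t => (φ t ^ 2 / 2) • γ) := by
  obtain ⟨p, ξ, hξ, rfl⟩ := hγ
  have h0 : ConicExpansion Γ V (fun t => (φ t ^ 2 / 2) • ξ 0) :=
    base _ (((hφ.pow 2).div_const 2).smul contDiff_const)
      fun t => V.smul_mem _ (hξ 0 (Nat.zero_le _))
  have h1 : ConicExpansion Γ V (fun t => ∑ j ∈ Finset.Icc 1 p,
      (0 - (φ t ^ 2 / 2) • Γ (ξ j) (ξ j))) :=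
    sum _ (fun j t => 0 - (φ t ^ 2 / 2) • Γ (ξ j) (ξ j)) fun j hj =>
      step (fun _ => 0) φ (ξ j) (base _ contDiff_const fun _ => V.zero_mem) hφ
        (hξ j (Finset.mem_Icc.1 hj).2)
  convert h0.add h1 using 2 with t
  simp [Finset.smul_sum, sub_eq_add_neg]

/-- If every vector of `V'` has the form `ξ₀ - ∑ j, Γ(ξ_j, ξ_j)` with `ξ_j ∈ V`, then every smooth
`V'`-valued curve has an expansion over `V` with smooth coefficients. The representations of the
vectors `±b_i`, for a basis `b` of `V'`, suffice: the coordinates `α_i` of the curve have no sign, but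
`α = (α + 1/2)² / 2 - (α - 1/2)² / 2`. -/
lemma of_saturated {V' : Submodule ℝ (EuclideanSpace ℝ (Fin d))}
    (hsat : ∀ γ ∈ V', ∃ (p : ℕ) (ξ : ℕ → EuclideanSpace ℝ (Fin d)), (∀ j ≤ p, ξ j ∈ V) ∧
      γ = ξ 0 - ∑ j ∈ Finset.Icc 1 p, Γ (ξ j) (ξ j))
    {v : ℝ → EuclideanSpace ℝ (Fin d)} (hv : ContDiff ℝ (⊤ : ℕ∞) v) (hV : ∀ t, v t ∈ V') :
    ConicExpansion Γ V v := by
  let b := stdOrthonormalBasis ℝ V'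
  let α : Fin (Module.finrank ℝ V') → ℝ → ℝ := fun i t =>
    inner ℝ (b i : EuclideanSpace ℝ (Fin d)) (v t)
  have hα : ∀ i, ContDiff ℝ (⊤ : ℕ∞) (α i) := fun i => contDiff_const.inner ℝ hv
  have hexp : ∀ t, v t = ∑ i, α i t • (b i : EuclideanSpace ℝ (Fin d)) := fun t => by
    have := congrArg (Subtype.val) (b.sum_repr' ⟨v t, hV t⟩)
    simpa [α] using this.symm
  have h := sum Finset.univ
    (fun i t => ((α i t + 1 / 2) ^ 2 / 2) • (b i : EuclideanSpace ℝ (Fin d))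
      + ((α i t - 1 / 2) ^ 2 / 2) • (-(b i : EuclideanSpace ℝ (Fin d))))
    (fun i _ => (sq_smul (hsat _ (b i).2) ((hα i).add contDiff_const)).add
      (sq_smul (hsat _ (V'.neg_mem (b i).2)) ((hα i).sub contDiff_const)))
  convert h using 2 with t
  rw [hexp]
  refine Finset.sum_congr rfl fun i _ => ?_
  module

end ConicExpansion

/-- A control with an expansion over `V` can be replaced by a smooth `V`-valued one at an arbitrarily
small cost in `z`. The additional `V`-valued control `u` collects the oscillations that replace
the quadratic terms already removed. -/
lemma exists_control_of_conicExpansion (hΓ : ∀ a b, Γ a b = Γ b a) (hF : LocallyLipschitz F)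
    (hτ : 0 < τ) {V : Submodule ℝ (EuclideanSpace ℝ (Fin d))}
    {v : ℝ → EuclideanSpace ℝ (Fin d)} (hv : ConicExpansion Γ V v) :
    ∀ (u x z : ℝ → EuclideanSpace ℝ (Fin d)), ContDiff ℝ (⊤ : ℕ∞) u → (∀ t, u t ∈ V) →
      IsTrajectory A Γ F τ x₀ z₀ (fun t => v t + u t) x z → ∀ ε > 0,
      ∃ v' x' z', ContDiff ℝ (⊤ : ℕ∞) v' ∧ (∀ t, v' t ∈ V) ∧
        IsTrajectory A Γ F τ x₀ z₀ v' x' z' ∧ ∀ t ∈ Icc (0 : ℝ) τ, ‖z' t - z t‖ ≤ ε := by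
  induction hv with
  | base v hv hV =>
    intro u x z hu huV h ε hε
    exact ⟨_, x, z, hv.add hu, fun t => V.add_mem (hV t) (huV t), h, fun t _ => by simp [hε.le]⟩
  | step v φ η hv hφ hη ih =>
    intro u x z hu huV h ε hε
    have e : (fun t => v t - (φ t ^ 2 / 2) • Γ η η + u t)
        = fun t => (v t + u t) - (φ t ^ 2 / 2) • Γ η η := by
      funext t; abel
    rw [e] at h
    obtain ⟨ψ, hψ, x₁, z₁, h₁, hz₁⟩ := exists_oscillating_control hΓ hF hτ
      (v := fun t => v t + u t) (hv.contDiff.continuous.add hu.continuous) hφ η h (half_pos hε)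
    simp only [add_assoc] at h₁
    obtain ⟨v', x', z', hv', hV', h', hz'⟩ := ih (fun t => u t + ψ t • η) x₁ z₁
      (hu.add (hψ.smul contDiff_const)) (fun t => V.add_mem (huV t) (V.smul_mem _ hη)) h₁
      (ε / 2) (half_pos hε)
    refine ⟨v', x', z', hv', hV', h', fun t ht => ?_⟩
    have := norm_sub_le_norm_sub_add_norm_sub (z' t) (z₁ t) (z t)
    linarith [hz₁ t ht, hz' t ht]

/-- `zref` can be approximated uniformly on `[0, τ]` by the `z`-components of trajectories whose
control is smooth and takes values in `V`. -/
def Trackable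
    (A : EuclideanSpace ℝ (Fin d) →L[ℝ] EuclideanSpace ℝ (Fin d))
    (Γ : EuclideanSpace ℝ (Fin d) →L[ℝ] EuclideanSpace ℝ (Fin d) →L[ℝ] EuclideanSpace ℝ (Fin d))
    (F : EuclideanSpace ℝ (Fin d) → EuclideanSpace ℝ (Fin d)) (τ : ℝ)
    (x₀ z₀ : EuclideanSpace ℝ (Fin d)) (zref : ℝ → EuclideanSpace ℝ (Fin d))
    (V : Submodule ℝ (EuclideanSpace ℝ (Fin d))) : Prop :=
  ∀ ε > 0, ∃ v x z, ContDiff ℝ (⊤ : ℕ∞) v ∧ (∀ t, v t ∈ V) ∧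
    IsTrajectory A Γ F τ x₀ z₀ v x z ∧ ∀ t ∈ Icc (0 : ℝ) τ, ‖z t - zref t‖ ≤ ε

lemma Trackable.of_saturated (hΓ : ∀ a b, Γ a b = Γ b a) (hF : LocallyLipschitz F)
    (hτ : 0 < τ) {zref : ℝ → EuclideanSpace ℝ (Fin d)}
    {V V' : Submodule ℝ (EuclideanSpace ℝ (Fin d))}
    (hsat : ∀ γ ∈ V', ∃ (p : ℕ) (ξ : ℕ → EuclideanSpace ℝ (Fin d)), (∀ j ≤ p, ξ j ∈ V) ∧
      γ = ξ 0 - ∑ j ∈ Finset.Icc 1 p, Γ (ξ j) (ξ j))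
    (h : Trackable A Γ F τ x₀ z₀ zref V') : Trackable A Γ F τ x₀ z₀ zref V := by
  intro ε hε
  obtain ⟨v, x, z, hv, hV, ht, hz⟩ := h (ε / 2) (half_pos hε)
  obtain ⟨v', x', z', hv', hV', ht', hz'⟩ := exists_control_of_conicExpansion hΓ hF hτ
    (ConicExpansion.of_saturated hsat hv hV) (fun _ => 0) x z contDiff_const
    (fun _ => V.zero_mem) (by simpa using ht) (ε / 2) (half_pos hε)
  refine ⟨v', x', z', hv', hV', ht', fun t ht => ?_⟩
  have := norm_sub_le_norm_sub_add_norm_sub (z' t) (z t) (zref t)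
  linarith [hz t ht, hz' t ht]

/-! ### Full control, and conclusion -/

/-- With full control, `x` can be prescribed. The curve `xref = -(żref + F(zref)) / zref` drives
`zref`, but it is only continuous and need not start at `x₀`; it is replaced by a smooth
approximation `p` plus a boundary layer `e^{-kt} (x₀ - p(0))`, which is small in the weak sense
as its antiderivative is of order `1 / k`. -/
lemma trackable_top (hF : LocallyLipschitz F) (hτ : 0 < τ)
    {zref : ℝ → EuclideanSpace ℝ (Fin d)} (hzref : ContDiffOn ℝ (⊤ : ℕ∞) zref (Icc 0 τ))
    (hzref0 : zref 0 = z₀) (hnz : ∀ l : Fin d, ∀ t ∈ Icc (0:ℝ) τ, zref t l ≠ 0) :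
    Trackable A Γ F τ x₀ z₀ zref ⊤ := by
  intro ε hε
  have h0mem : (0 : ℝ) ∈ Icc (0 : ℝ) τ := ⟨le_refl _, hτ.le⟩
  have hzc := hzref.continuousOn
  have hdc : ContinuousOn (derivWithin zref (Icc 0 τ)) (Icc 0 τ) :=
    hzref.continuousOn_derivWithin (uniqueDiffOn_Icc hτ) (by simp)
  have hproj : ∀ {g : ℝ → EuclideanSpace ℝ (Fin d)} (l : Fin d), ContinuousOn g (Icc 0 τ) →
      ContinuousOn (fun t => g t l) (Icc 0 τ) := fun l hg =>
    (EuclideanSpace.proj (𝕜 := ℝ) l).continuous.comp_continuousOn hg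
  set xref : ℝ → EuclideanSpace ℝ (Fin d) := fun t => WithLp.toLp 2 fun l =>
    -((derivWithin zref (Icc 0 τ) t l + F (zref t) l) / zref t l) with hxref
  have hxc : ContinuousOn xref (Icc 0 τ) := by
    refine (PiLp.continuous_toLp 2 _).comp_continuousOn (continuousOn_pi.2 fun l => ?_)
    exact (((hproj l hdc).add (hproj l (hF.continuous.comp_continuousOn hzc))).div
      (hproj l hzc) (hnz l)).neg
  have hzd : ∀ t ∈ Icc (0 : ℝ) τ,
      HasDerivWithinAt zref (-(hadamard d (zref t) (xref t) + F (zref t))) (Icc 0 τ) t := by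
    intro t ht
    refine ((hzref.differentiableOn (by simp) t ht).hasDerivWithinAt).congr_deriv ?_
    ext l
    have := hnz l t ht
    simp only [hadamard_apply, hxref, PiLp.neg_apply, PiLp.add_apply]
    field_simp
    ring
  obtain ⟨δ, hδ, H⟩ := exists_z_of_weakly_close hF hτ hxc hzd hε
    (M := ‖x₀ - xref 0‖ + 2) (by positivity)
  obtain ⟨p, hp, hpx, -⟩ := (hxc.domRestrict.Icc_extend' (h := hτ.le)).exists_contDiff_approx (⊤ : ℕ∞)
    (ε := fun _ => min δ 1) continuous_const (fun _ => by positivity)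
  have hpx' : ∀ t ∈ Icc (0 : ℝ) τ, ‖p t - xref t‖ ≤ min δ 1 := fun t ht => by
    have := (hpx t).le
    rwa [dist_eq_norm, IccExtend_of_mem _ _ ht] at this
  set e : EuclideanSpace ℝ (Fin d) := x₀ - p 0 with he
  have heb : ‖e‖ ≤ ‖x₀ - xref 0‖ + 1 := by
    have h1 := (hpx' 0 h0mem).trans (min_le_right _ _)
    have h2 := norm_sub_le_norm_sub_add_norm_sub x₀ (xref 0) (p 0)
    rw [norm_sub_rev (xref 0)] at h2
    linarith
  obtain ⟨k, hk1, hk⟩ : ∃ k : ℝ, 1 ≤ k ∧ ‖e‖ / k ≤ δ := by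
    refine ⟨max 1 (‖e‖ / δ), le_max_left _ _, ?_⟩
    rw [div_le_iff₀ (by positivity), mul_comm, ← div_le_iff₀ (by positivity)]
    exact le_max_right _ _
  have hk0 : 0 < k := by positivity
  have hexp1 : ∀ t ∈ Icc (0 : ℝ) τ, Real.exp (-k * t) ≤ 1 := fun t ht =>
    Real.exp_le_one_iff.2 (by nlinarith [ht.1])
  set x : ℝ → EuclideanSpace ℝ (Fin d) := fun t => p t + Real.exp (-k * t) • e with hx
  have hxsm : ContDiff ℝ (⊤ : ℕ∞) x :=
    hp.add ((Real.contDiff_exp.comp (contDiff_const.mul contDiff_id)).smul contDiff_const)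
  obtain ⟨z, hz0, hzd', hzb⟩ := H x (fun t => (-(Real.exp (-k * t) / k)) • e)
    (fun t => p t - xref t) hxsm.continuous.continuousOn
    (fun t ht => by
      have h1 := (hpx' t ht).trans (min_le_right _ _)
      have h2 : ‖Real.exp (-k * t) • e‖ ≤ ‖e‖ := by
        rw [norm_smul, Real.norm_of_nonneg (Real.exp_pos _).le]
        exact mul_le_of_le_one_left (norm_nonneg _) (hexp1 t ht)
      have h3 := norm_add_le (p t - xref t) (Real.exp (-k * t) • e)
      have h4 : x t - xref t = (p t - xref t) + Real.exp (-k * t) • e := by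
        simp only [hx]; abel
      rw [h4]; linarith)
    (fun t ht => by
      have h1 : HasDerivAt (fun t => Real.exp (-k * t)) (Real.exp (-k * t) * -k) t := by
        simpa using ((hasDerivAt_id t).const_mul (-k)).exp
      refine (((h1.div_const k).neg).smul_const e).hasDerivWithinAt.congr_deriv ?_
      have h2 : -(Real.exp (-k * t) * -k / k) = Real.exp (-k * t) := by field_simp
      rw [h2]; simp only [hx]; abel)
    (fun t ht => by
      rw [norm_smul, norm_neg, Real.norm_of_nonneg (by positivity)]
      calc _ ≤ 1 / k * ‖e‖ := by gcongr; exact hexp1 t ht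
        _ = ‖e‖ / k := by ring
        _ ≤ δ := hk)
    (fun t ht => (hpx' t ht).trans (min_le_left _ _))
  refine ⟨fun t => deriv x t + A (x t) + Γ (x t) (x t), x, z, ?_, fun _ => trivial,
    ⟨by simp [hx, he], hz0.trans hzref0, fun t ht => ?_, hzd'⟩, hzb⟩
  · have := (contDiff_infty_iff_deriv.1 hxsm).2
    exact (this.add (A.contDiff.comp hxsm)).add ((Γ.contDiff.comp hxsm).clm_apply hxsm)
  · exact ((hxsm.differentiable (by simp) t).hasDerivAt.hasDerivWithinAt).congr_deriv (by abel)

end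

/-- The integral form of a differential equation on `[0, τ]`. -/
lemma eq_add_integral {E : Type*} [NormedAddCommGroup E] [NormedSpace ℝ E] [CompleteSpace E]
    {τ : ℝ} {y y' : ℝ → E} (hy : ∀ t ∈ Icc (0 : ℝ) τ, HasDerivWithinAt y (y' t) (Icc 0 τ) t)
    (hy' : ContinuousOn y' (Icc 0 τ)) {t : ℝ} (ht : t ∈ Icc (0 : ℝ) τ) :
    y t = y 0 + ∫ s in (0 : ℝ)..t, y' s := by
  have hsub : Icc 0 t ⊆ Icc 0 τ := Icc_subset_Icc_right ht.2
  rw [intervalIntegral.integral_eq_sub_of_hasDerivAt_of_le ht.1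
    (fun s hs => ((hy s (hsub hs)).continuousWithinAt).mono hsub)
    (fun s hs => (hy s (hsub (Ioo_subset_Icc_self hs))).hasDerivAt
      (Icc_mem_nhds hs.1 (hs.2.trans_le ht.2)))
    ((hy'.mono hsub).intervalIntegrable_of_Icc ht.1)]
  abel

/-- (Example 7.5, dynamic motion planning.) Under the saturation condition
for `(f, B)` on `X = ℝ^d`, for any smooth reference curve `z_ref` with nowhere-vanishing
components, the `z`-component of the coupled system `ẋ + Ax + f(x) = Bu`,
`ż + Γ̃(z,x) + F(z) = 0` (with `Γ̃` the componentwise product) can track `z_ref` uniformly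
within any `ε > 0`. -/
theorem dynamic_motion_planning
    (d : ℕ) (hd : 1 ≤ d)
    {U : Type*} [NormedAddCommGroup U] [InnerProductSpace ℝ U] [FiniteDimensional ℝ U]
    (A : EuclideanSpace ℝ (Fin d) →ₗ[ℝ] EuclideanSpace ℝ (Fin d))
    (B : U →ₗ[ℝ] EuclideanSpace ℝ (Fin d))
    (Γ : EuclideanSpace ℝ (Fin d) →ₗ[ℝ] EuclideanSpace ℝ (Fin d) →ₗ[ℝ] EuclideanSpace ℝ (Fin d))
    (hΓ : ∀ a b : EuclideanSpace ℝ (Fin d), Γ a b = Γ b a)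
    (n : ℕ) (E : ℕ → Submodule ℝ (EuclideanSpace ℝ (Fin d)))
    (hE0 : E 0 = LinearMap.range B) (hEn : E n = ⊤)
    (hsat : ∀ i, 1 ≤ i → i ≤ n → ∀ γ ∈ E i, ∃ (p : ℕ) (ξ : ℕ → EuclideanSpace ℝ (Fin d)),
      (∀ j ≤ p, ξ j ∈ E (i - 1)) ∧
      γ = ξ 0 - ∑ j ∈ Finset.Icc 1 p, Γ (ξ j) (ξ j))
    (F : EuclideanSpace ℝ (Fin d) → EuclideanSpace ℝ (Fin d)) (hF : LocallyLipschitz F)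
    (τ : ℝ) (hτ : 0 < τ) (x₀ : EuclideanSpace ℝ (Fin d)) (z₀ : EuclideanSpace ℝ (Fin d))
    (zref : ℝ → EuclideanSpace ℝ (Fin d))
    (hzref : ContDiffOn ℝ (⊤ : ℕ∞) zref (Icc 0 τ))
    (hzref0 : zref 0 = z₀)
    (hnz : ∀ l : Fin d, ∀ t ∈ Icc (0:ℝ) τ, zref t l ≠ 0)
    (ε : ℝ) (hε : 0 < ε) :
    ∃ u : ℝ → U, ContDiffOn ℝ (⊤ : ℕ∞) u (Icc 0 τ) ∧
      ∃ x z : ℝ → EuclideanSpace ℝ (Fin d),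
        ContinuousOn x (Icc 0 τ) ∧ ContinuousOn z (Icc 0 τ) ∧
        (∀ t ∈ Icc (0:ℝ) τ,
          x t = x₀ + ∫ s in (0:ℝ)..t, (B (u s) - A (x s) - Γ (x s) (x s))) ∧
        (∀ t ∈ Icc (0:ℝ) τ,
          z t = z₀ - ∫ s in (0:ℝ)..t,
            ((WithLp.equiv 2 (Fin d → ℝ)).symm (fun l => z s l * x s l) + F (z s))) ∧
        (⨆ t ∈ Icc (0:ℝ) τ, ‖z t - zref t‖) < ε := by
  have hX : Trackable A.toContinuousLinearMap Γ.toContinuousBilinearMap F τ x₀ z₀ zref (E n) := by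
    rw [hEn]
    exact trackable_top hF hτ hzref hzref0 hnz
  have hdown : ∀ k ≤ n, Trackable A.toContinuousLinearMap Γ.toContinuousBilinearMap F τ x₀ z₀ zref
      (E (n - k)) := by
    intro k
    induction k with
    | zero => intro _; simpa using hX
    | succ k ih =>
      intro hk
      have h := hsat (n - k) (by omega) (by omega)
      have e : n - k - 1 = n - (k + 1) := by omega
      rw [e] at h
      exact Trackable.of_saturated hΓ hF hτ h (ih (by omega))
  obtain ⟨v, x, z, hv, hvV, htr, hz⟩ := hdown n le_rfl (ε / 2) (half_pos hε)
  rw [Nat.sub_self, hE0] at hvV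
  -- `C'` extends a linear right inverse of `B` on its range to the whole space.
  obtain ⟨C, hC⟩ := B.rangeRestrict.exists_rightInverse_of_surjective B.range_rangeRestrict
  obtain ⟨C', hC'⟩ := LinearMap.exists_extend C
  have hBu : ∀ t, B (C' (v t)) = v t := fun t => by
    have h1 : C' (v t) = C ⟨v t, hvV t⟩ := LinearMap.congr_fun hC' ⟨v t, hvV t⟩
    rw [h1]
    exact congrArg Subtype.val (LinearMap.congr_fun hC ⟨v t, hvV t⟩)
  have hxc := htr.continuousOn_x
  have hzc := htr.continuousOn_z
  have hAc : Continuous A := A.continuous_of_finiteDimensional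
  refine ⟨fun t => C' (v t), (C'.toContinuousLinearMap.contDiff.comp hv).contDiffOn, x, z, hxc, hzc,
    fun t ht => ?_, fun t ht => ?_, ?_⟩
  · simp only [hBu]
    rw [← htr.x_zero]
    refine eq_add_integral htr.x_deriv ?_ ht
    exact (hv.continuous.continuousOn.sub (hAc.comp_continuousOn hxc)).sub
      ((Γ.toContinuousBilinearMap.continuous.comp_continuousOn hxc).clm_apply hxc)
  · rw [← htr.z_zero, sub_eq_add_neg, ← intervalIntegral.integral_neg]
    refine eq_add_integral htr.z_deriv ?_ ht
    exact ((((hadamard d).continuous.comp_continuousOn hzc).clm_apply hxc).add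
      (hF.continuous.comp_continuousOn hzc)).neg
  · refine lt_of_le_of_lt (Real.iSup_le (fun t => Real.iSup_le (fun ht => hz t ht) ?_) ?_)
      (half_lt_self hε) <;> exact (half_pos hε).le
end
end
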